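/- arXiv:2211.04407 — 6 statements merged into one kernel-verified Lean document; each statement's English description precedes it below -/
import Mathlib

section
/- For any integer L ≥ 2 and any points x₁, …, x_L ∈ ℝⁿ, the squared Chebyshev radius admits the minimax representation rad²(x₁,…,x_L) = max_{z ∈ Δ_L} ∑_{i=1}^L z(i)·‖x_i − y_z‖², where Δ_L := {z ∈ ℝ^L : z(i) ≥ 0 for all i, ∑_i z(i) = 1} is the probability simplex and y_z := ∑_{i=1}^L z(i)·x_i; moreover the maximum over Δ_L is attained. -/
lemma parallel_axis {n L : ℕ} (x : Fin L → EuclideanSpace ℝ (Fin n)) (z : Fin L → ℝ)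
    (hz : ∑ i, z i = 1) (c : EuclideanSpace ℝ (Fin n)) :
    ∑ i, z i * ‖x i - c‖ ^ 2 =
      ∑ i, z i * ‖x i - ∑ j, z j • x j‖ ^ 2 + ‖(∑ j, z j • x j) - c‖ ^ 2 := by
  set y := ∑ j, z j • x j with hy
  have h1 : ∀ i, z i * ‖x i - c‖ ^ 2 =
      z i * ‖x i - y‖ ^ 2 + 2 * inner ℝ (z i • (x i - y)) (y - c) + z i * ‖y - c‖ ^ 2 := by
    intro i
    have : x i - c = (x i - y) + (y - c) := by abel
    rw [this, norm_add_sq_real, real_inner_smul_left]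
    ring
  have h2 : ∑ i, z i • (x i - y) = 0 := by
    simp only [smul_sub, Finset.sum_sub_distrib, ← Finset.sum_smul, hz, one_smul]
    rw [← hy, sub_self]
  rw [Finset.sum_congr rfl (fun i _ => h1 i), Finset.sum_add_distrib, Finset.sum_add_distrib,
    ← Finset.mul_sum, ← sum_inner, h2, ← Finset.sum_mul, hz]
  simp

/-- The squared Chebyshev radius `rad² = ⨅ y, ⨆ i, ‖x i - y‖²` admits the
minimax representation `rad² = max_{z ∈ Δ_L} ∑ i, z i · ‖x i - y_z‖²`, where
`Δ_L` is the probability simplex and `y_z = ∑ i, z i • x i`; the maximum is attained. -/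
theorem sq_chebyshev_radius_minimax (n L : ℕ) (hL : 2 ≤ L)
    (x : Fin L → EuclideanSpace ℝ (Fin n)) :
    IsGreatest
      {v : ℝ | ∃ z : Fin L → ℝ, (∀ i, 0 ≤ z i) ∧ (∑ i, z i = 1) ∧
        v = ∑ i, z i * ‖x i - ∑ j, z j • x j‖ ^ 2}
      (⨅ y : EuclideanSpace ℝ (Fin n), ⨆ i, ‖x i - y‖ ^ 2) := by
  haveI : Nonempty (Fin L) := ⟨⟨0, by omega⟩⟩
  have upper : ∀ z : Fin L → ℝ, (∀ i, 0 ≤ z i) → (∑ i, z i = 1) →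
      ∑ i, z i * ‖x i - ∑ j, z j • x j‖ ^ 2 ≤
        ⨅ y : EuclideanSpace ℝ (Fin n), ⨆ i, ‖x i - y‖ ^ 2 := by
    intro z h0 h1
    refine le_ciInf fun y => ?_
    have hp := parallel_axis x z h1 y
    have hb : ∑ i, z i * ‖x i - y‖ ^ 2 ≤ ∑ i, z i * ⨆ i, ‖x i - y‖ ^ 2 :=
      Finset.sum_le_sum fun i _ => mul_le_mul_of_nonneg_left
        (le_ciSup (f := fun i => ‖x i - y‖ ^ 2) (Set.finite_range _).bddAbove i) (h0 i)
    rw [← Finset.sum_mul, h1, one_mul] at hb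
    have := sq_nonneg ‖(∑ j, z j • x j) - y‖
    linarith
  refine ⟨?_, ?_⟩
  · obtain ⟨z, ⟨h0, h1⟩, hmax⟩ := (isCompact_stdSimplex ℝ (Fin L)).exists_isMaxOn
      ⟨_, single_mem_stdSimplex ℝ (Classical.arbitrary (Fin L))⟩
      (f := fun z : Fin L → ℝ => ∑ i, z i * ‖x i - ∑ j, z j • x j‖ ^ 2)
      (by fun_prop)
    refine ⟨z, h0, h1, le_antisymm ?_ (upper z h0 h1)⟩
    set y := ∑ j, z j • x j with hy
    refine (ciInf_le ⟨0, ?_⟩ y).trans (ciSup_le fun k => ?_)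
    · rintro _ ⟨w, rfl⟩
      exact Real.iSup_nonneg fun i => sq_nonneg _
    set F := ∑ i, z i * ‖x i - y‖ ^ 2 with hF
    have hF0 : 0 ≤ F := Finset.sum_nonneg fun i _ => mul_nonneg (h0 i) (sq_nonneg _)
    by_contra! hlt
    set a := ‖x k - y‖ ^ 2 with ha
    have ha0 : 0 < a := by linarith
    set t := (a - F) / (2 * a) with ht
    have ht0 : 0 < t := div_pos (by linarith) (by linarith)
    have ht1 : t ≤ 1 := by rw [ht, div_le_one (by linarith)]; linarith
    have hta : t * a = (a - F) / 2 := by rw [ht]; field_simp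
    set w : Fin L → ℝ := (1 - t) • z + t • Pi.single k (1 : ℝ) with hw
    have hwm : w ∈ stdSimplex ℝ (Fin L) :=
      convex_stdSimplex ℝ (Fin L) ⟨h0, h1⟩ (single_mem_stdSimplex ℝ k)
        (by linarith) ht0.le (by ring)
    have hle : ∑ i, w i * ‖x i - ∑ j, w j • x j‖ ^ 2 ≤ F := hmax hwm
    have hp := parallel_axis x w hwm.2 y
    have e1 : ∑ i, w i * ‖x i - y‖ ^ 2 = (1 - t) * F + t * a := by
      simp [hw, add_mul, Finset.sum_add_distrib, hF, Finset.mul_sum, mul_assoc,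
        Pi.single_apply, ha]
    have e2 : (∑ j, w j • x j) - y = t • (x k - y) := by
      have : ∑ j, w j • x j = (1 - t) • y + t • x k := by
        simp [hw, add_smul, Finset.sum_add_distrib, hy, Finset.smul_sum, mul_smul,
          Pi.single_apply]
      rw [this]; module
    rw [e1, e2, norm_smul, mul_pow, Real.norm_eq_abs, sq_abs, ← ha] at hp
    have : t * (a - F - t * a) ≤ 0 := by nlinarith
    rw [hta] at this
    nlinarith
  · rintro v ⟨z, h0, h1, rfl⟩
    exact upper z h0 h1
end

section
/- For any integer L ≥ 2 and any real λ > 0, lim_{K→∞} K^{L−1} ∫_{[−1,1]^L} exp( −K² λ ( ∑_{i=1}^L t_i² − (1/L)(∑_{i=1}^L t_i)² ) ) dt = 2√L · (π/λ)^{(L−1)/2}, where the integral is with respect to L-dimensional Lebesgue measure. -/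
open Real

open MeasureTheory in
theorem aux_inner_x (n : ℕ) (lam : ℝ) (u : Fin n → ℝ) :
    ∫ x : ℝ, Real.exp (-lam * (∑ i, (u i - x) ^ 2 + x ^ 2)) =
      √(π / (lam * (n + 1))) *
        Real.exp (-lam * (∑ i, u i ^ 2 - ((n : ℝ) + 1)⁻¹ * (∑ i, u i) ^ 2)) := by
  have hn : ((n : ℝ) + 1) ≠ 0 := by positivity
  have key : ∀ x : ℝ, Real.exp (-lam * (∑ i, (u i - x) ^ 2 + x ^ 2)) =
      Real.exp (-lam * (∑ i, u i ^ 2 - ((n : ℝ) + 1)⁻¹ * (∑ i, u i) ^ 2)) *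
      Real.exp (-(lam * (n + 1)) * (x - ((n : ℝ) + 1)⁻¹ * ∑ i, u i) ^ 2) := by
    intro x
    rw [← Real.exp_add]
    congr 1
    have h1 : ∑ i, (u i - x) ^ 2 = ∑ i, u i ^ 2 - 2 * x * ∑ i, u i + n * x ^ 2 := by
      simp only [sub_sq, Finset.sum_add_distrib, Finset.sum_sub_distrib, Finset.mul_sum]
      simp
      apply Finset.sum_congr rfl
      intros; ring
    rw [h1]
    field_simp
    ring
  simp_rw [key]
  rw [integral_const_mul, integral_sub_right_eq_self
    (fun x : ℝ => Real.exp (-(lam * (n + 1)) * x ^ 2)), integral_gaussian, mul_comm]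

open MeasureTheory in
theorem aux_prod_form (n : ℕ) (lam x : ℝ) (u : Fin n → ℝ) :
    Real.exp (-lam * (∑ i, (u i - x) ^ 2 + x ^ 2)) =
      Real.exp (-lam * x ^ 2) * ∏ i, Real.exp (-lam * (u i - x) ^ 2) := by
  rw [← Real.exp_sum, ← Real.exp_add, ← Finset.mul_sum]
  congr 1; ring

open MeasureTheory in
theorem aux_inner_u (n : ℕ) (lam x : ℝ) :
    ∫ u : Fin n → ℝ, Real.exp (-lam * (∑ i, (u i - x) ^ 2 + x ^ 2)) =
      √(π / lam) ^ n * Real.exp (-lam * x ^ 2) := by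
  simp_rw [aux_prod_form]
  rw [integral_const_mul,
    integral_fintype_prod_volume_eq_pow (fun y : ℝ => Real.exp (-lam * (y - x) ^ 2)),
    integral_sub_right_eq_self (fun y : ℝ => Real.exp (-lam * y ^ 2)), integral_gaussian]
  simp [mul_comm]

open MeasureTheory in
theorem aux_integrable (n : ℕ) (lam : ℝ) (hlam : 0 < lam) :
    Integrable (Function.uncurry fun (x : ℝ) (u : Fin n → ℝ) =>
      Real.exp (-lam * (∑ i, (u i - x) ^ 2 + x ^ 2))) (volume.prod volume) := by
  rw [integrable_prod_iff]
  · refine ⟨Filter.Eventually.of_forall fun x => ?_, ?_⟩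
    · simp only [Function.uncurry, aux_prod_form]
      apply Integrable.const_mul
      exact Integrable.fintype_prod (μ := fun _ => volume)
        (f := fun _ y => Real.exp (-lam * (y - x) ^ 2))
        fun i => (integrable_exp_neg_mul_sq hlam).comp_sub_right x
    · simp only [Function.uncurry, Real.norm_eq_abs, Real.abs_exp, aux_inner_u]
      exact (integrable_exp_neg_mul_sq hlam).const_mul _
  · apply Continuous.aestronglyMeasurable
    unfold Function.uncurry
    fun_prop

open MeasureTheory in
theorem aux_gauss_integrable (n : ℕ) (lam : ℝ) (hlam : 0 < lam) :
    Integrable (fun u : Fin n → ℝ =>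
      Real.exp (-lam * (∑ i, u i ^ 2 - ((n : ℝ) + 1)⁻¹ * (∑ i, u i) ^ 2))) := by
  have h := (aux_integrable n lam hlam).integral_prod_right
  simp only [Function.uncurry, aux_inner_x] at h
  have hc : √(π / (lam * (n + 1))) ≠ 0 := by positivity
  exact (integrable_const_mul_iff (isUnit_iff_ne_zero.mpr hc) _).mp h

open MeasureTheory in
theorem aux_gauss (n : ℕ) (lam : ℝ) (hlam : 0 < lam) :
    ∫ u : Fin n → ℝ,
      Real.exp (-lam * (∑ i, u i ^ 2 - ((n : ℝ) + 1)⁻¹ * (∑ i, u i) ^ 2)) =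
      √((n : ℝ) + 1) * √(π / lam) ^ n := by
  have h := integral_integral_swap (aux_integrable n lam hlam)
  simp only [aux_inner_x, aux_inner_u] at h
  rw [integral_const_mul, integral_const_mul, integral_gaussian] at h
  have h2 : √(π / lam) = √(π / (lam * (n + 1))) * √((n : ℝ) + 1) := by
    rw [← Real.sqrt_mul (by positivity)]
    congr 1
    field_simp
  have hc : √(π / (lam * (n + 1))) ≠ 0 := by positivity
  apply mul_left_cancel₀ hc
  rw [← h]
  nth_rewrite 2 [h2]
  ring

open MeasureTheory in
theorem aux_fubini (n : ℕ) (c : ℝ) :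
    ∫ t : Fin (n + 1) → ℝ in Set.Icc (fun _ => (-1 : ℝ)) (fun _ => (1 : ℝ)),
          Real.exp (c * (∑ i, t i ^ 2 - ((n : ℝ) + 1)⁻¹ * (∑ i, t i) ^ 2)) =
    ∫ s : ℝ in Set.Icc (-1) 1,
      ∫ v : Fin n → ℝ in Set.Icc (fun _ => (-1 : ℝ)) (fun _ => (1 : ℝ)),
        Real.exp (c * ((s ^ 2 + ∑ i, v i ^ 2) - ((n : ℝ) + 1)⁻¹ * (s + ∑ i, v i) ^ 2)) := by
  have mp := volume_preserving_piFinSuccAbove (fun _ : Fin (n + 1) => ℝ) 0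
  have h := mp.setIntegral_preimage_emb (MeasurableEquiv.measurableEmbedding _)
    (fun p : ℝ × (Fin n → ℝ) =>
      Real.exp (c * ((p.1 ^ 2 + ∑ i, p.2 i ^ 2) - ((n : ℝ) + 1)⁻¹ * (p.1 + ∑ i, p.2 i) ^ 2)))
    (Set.Icc (-1) 1 ×ˢ Set.Icc (fun _ => (-1 : ℝ)) (fun _ => (1 : ℝ)))
  rw [Measure.volume_eq_prod, setIntegral_prod] at h
  · rw [← h]
    have hset : (MeasurableEquiv.piFinSuccAbove (fun _ : Fin (n + 1) => ℝ) 0) ⁻¹'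
        (Set.Icc (-1) 1 ×ˢ Set.Icc (fun _ => (-1 : ℝ)) (fun _ => (1 : ℝ))) =
        Set.Icc (fun _ => (-1 : ℝ)) (fun _ => (1 : ℝ)) := by
      ext t
      simp only [Set.mem_preimage, Set.mem_prod, Set.mem_Icc, Pi.le_def, Fin.forall_fin_succ,
        MeasurableEquiv.piFinSuccAbove_apply, Fin.insertNthEquiv_symm_apply, Fin.removeNth_apply,
        Fin.zero_succAbove]
      tauto
    rw [hset]
    simp [Fin.sum_univ_succ, Fin.tail]
  · apply ContinuousOn.integrableOn_compact
    · exact isCompact_Icc.prod isCompact_Icc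
    · apply Continuous.continuousOn
      fun_prop

open MeasureTheory in
theorem aux_scale (n : ℕ) (lam K s : ℝ) (hK : 0 < K) :
    K ^ n * ∫ v : Fin n → ℝ in Set.Icc (fun _ => (-1 : ℝ)) (fun _ => (1 : ℝ)),
        Real.exp (-(K ^ 2) * lam *
          ((s ^ 2 + ∑ i, v i ^ 2) - ((n : ℝ) + 1)⁻¹ * (s + ∑ i, v i) ^ 2)) =
    ∫ u : Fin n → ℝ, {p : ℝ × (Fin n → ℝ) | ∀ i, p.1 + K⁻¹ * p.2 i ∈ Set.Icc (-1 : ℝ) 1}.indicator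
        (fun p => Real.exp (-lam * (∑ i, p.2 i ^ 2 - ((n : ℝ) + 1)⁻¹ * (∑ i, p.2 i) ^ 2)))
        (s, u) := by
  rw [← integral_indicator measurableSet_Icc]
  set F : (Fin n → ℝ) → ℝ := (Set.Icc (fun _ => (-1 : ℝ)) (fun _ => (1 : ℝ))).indicator
    fun v => Real.exp (-(K ^ 2) * lam *
          ((s ^ 2 + ∑ i, v i ^ 2) - ((n : ℝ) + 1)⁻¹ * (s + ∑ i, v i) ^ 2)) with hF
  have h1 := Measure.integral_comp_smul volume (fun v => F ((fun _ => s) + v)) K⁻¹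
  rw [integral_add_left_eq_self F (fun _ => s)] at h1
  simp only [Module.finrank_fintype_fun_eq_card, Fintype.card_fin, inv_pow, inv_inv, smul_eq_mul,
    abs_of_pos (pow_pos hK n)] at h1
  rw [← h1]
  congr 1
  ext u
  have hn : ((n : ℝ) + 1) ≠ 0 := by positivity
  have hmem : ((fun _ => s) + K⁻¹ • u ∈ Set.Icc (fun _ : Fin n => (-1 : ℝ)) (fun _ => (1 : ℝ))) ↔
      (s, u) ∈ {p : ℝ × (Fin n → ℝ) | ∀ i, p.1 + K⁻¹ * p.2 i ∈ Set.Icc (-1 : ℝ) 1} := by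
    simp only [Set.mem_Icc, Pi.le_def, Pi.add_apply, Pi.smul_apply, smul_eq_mul, Set.mem_ofPred_eq,
      forall_and]
  by_cases hm : (s, u) ∈ {p : ℝ × (Fin n → ℝ) | ∀ i, p.1 + K⁻¹ * p.2 i ∈ Set.Icc (-1 : ℝ) 1}
  · rw [hF, Set.indicator_of_mem hm, Set.indicator_of_mem (hmem.mpr hm)]
    congr 1
    simp only [Pi.add_apply, Pi.smul_apply, smul_eq_mul]
    have e1 : ∑ i, (s + K⁻¹ * u i) ^ 2 =
        n * s ^ 2 + 2 * s * K⁻¹ * ∑ i, u i + K⁻¹ ^ 2 * ∑ i, u i ^ 2 := by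
      simp only [add_sq, Finset.sum_add_distrib, Finset.mul_sum, mul_pow]
      simp
      apply Finset.sum_congr rfl
      intros; ring
    have e2 : ∑ i, (s + K⁻¹ * u i) = n * s + K⁻¹ * ∑ i, u i := by
      simp [Finset.sum_add_distrib, Finset.mul_sum]
    rw [e1, e2]
    field_simp
    ring
  · rw [hF, Set.indicator_of_notMem hm, Set.indicator_of_notMem (fun h => hm (hmem.mp h))]

/-- For `L ≥ 2` and `λ > 0`,
`lim_{K → ∞} K^(L-1) ∫_{[-1,1]^L} exp(-K² λ (∑ i, t i ^ 2 - (1/L)(∑ i, t i)^2)) dt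
  = 2 √L (π/λ)^((L-1)/2)`. -/
theorem laplace_asymptotics_degenerate_quadratic_form (L : ℕ) (hL : 2 ≤ L)
    (lam : ℝ) (hlam : 0 < lam) :
    Filter.Tendsto
      (fun K : ℝ => K ^ (L - 1) *
        ∫ t : Fin L → ℝ in Set.Icc (fun _ => (-1 : ℝ)) (fun _ => (1 : ℝ)),
          Real.exp (-(K ^ 2) * lam * (∑ i, t i ^ 2 - (L : ℝ)⁻¹ * (∑ i, t i) ^ 2)))
      Filter.atTop
      (nhds (2 * Real.sqrt L * (Real.pi / lam) ^ (((L : ℝ) - 1) / 2))) := by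
  obtain ⟨n, rfl⟩ : ∃ n, L = n + 1 := ⟨L - 1, by omega⟩
  simp only [Nat.add_sub_cancel, Nat.cast_add, Nat.cast_one, add_sub_cancel_right]
  set E : (Fin n → ℝ) → ℝ := fun u =>
    Real.exp (-lam * (∑ i, u i ^ 2 - ((n : ℝ) + 1)⁻¹ * (∑ i, u i) ^ 2)) with hE
  have hEint : MeasureTheory.Integrable E := aux_gauss_integrable n lam hlam
  have hEcont : Continuous E := by fun_prop
  let A : ℝ → Set (ℝ × (Fin n → ℝ)) := fun K =>
    {p : ℝ × (Fin n → ℝ) | ∀ i, p.1 + K⁻¹ * p.2 i ∈ Set.Icc (-1 : ℝ) 1}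
  have hA : ∀ K, MeasurableSet (A K) := by
    intro K
    have : A K = ⋂ i, (fun p : ℝ × (Fin n → ℝ) => p.1 + K⁻¹ * p.2 i) ⁻¹' Set.Icc (-1 : ℝ) 1 := by
      ext p; simp [A]
    rw [this]
    refine MeasurableSet.iInter fun i => ?_
    exact (by fun_prop : Measurable (fun p : ℝ × (Fin n → ℝ) => p.1 + K⁻¹ * p.2 i)) measurableSet_Icc
  have hmeas : ∀ K, MeasureTheory.StronglyMeasurable ((A K).indicator fun p => E p.2) := fun K =>
    (hEcont.comp continuous_snd).stronglyMeasurable.indicator (hA K)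
  have hb : ∀ K p, ‖(A K).indicator (fun p => E p.2) p‖ ≤ E p.2 := by
    intro K p
    refine (norm_indicator_le_norm_self _ _).trans ?_
    simp [hE]
  have hval : 2 * √((n : ℝ) + 1) * (π / lam) ^ ((n : ℝ) / 2) =
      ∫ s : ℝ in Set.Icc (-1) 1, ∫ u, E u := by
    rw [hE, aux_gauss n lam hlam, MeasureTheory.setIntegral_const]
    have : (π / lam) ^ ((n : ℝ) / 2) = √(π / lam) ^ n := by
      rw [Real.sqrt_eq_rpow, ← Real.rpow_natCast, ← Real.rpow_mul (by positivity)]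
      congr 1; ring
    rw [this]
    simp
    norm_num
    ring
  rw [hval]
  have main : Filter.Tendsto (fun K : ℝ => ∫ s : ℝ in Set.Icc (-1) 1,
      ∫ u, (A K).indicator (fun p => E p.2) (s, u)) Filter.atTop
      (nhds (∫ s : ℝ in Set.Icc (-1) 1, ∫ u, E u)) := by
    apply MeasureTheory.tendsto_integral_filter_of_dominated_convergence (fun _ => ∫ u, E u)
    · exact Filter.Eventually.of_forall fun K =>
        (hmeas K).integral_prod_right'.aestronglyMeasurable
    · refine Filter.Eventually.of_forall fun K => Filter.Eventually.of_forall fun s => ?_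
      exact MeasureTheory.norm_integral_le_of_norm_le hEint
        (Filter.Eventually.of_forall fun u => hb K (s, u))
    · exact MeasureTheory.integrable_const _
    · rw [← MeasureTheory.restrict_Ioo_eq_restrict_Icc]
      filter_upwards [MeasureTheory.ae_restrict_mem measurableSet_Ioo] with s hs
      apply MeasureTheory.tendsto_integral_filter_of_dominated_convergence E
      · exact Filter.Eventually.of_forall fun K =>
          ((hmeas K).comp_measurable measurable_prodMk_left).aestronglyMeasurable
      · exact Filter.Eventually.of_forall fun K => Filter.Eventually.of_forall fun u => hb K (s, u)
      · exact hEint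
      · refine Filter.Eventually.of_forall fun u => ?_
        have hev : ∀ᶠ K : ℝ in Filter.atTop, (s, u) ∈ A K := by
          simp only [A, Set.mem_ofPred_eq, Filter.eventually_all]
          intro i
          have ht : Filter.Tendsto (fun K : ℝ => s + K⁻¹ * u i) Filter.atTop (nhds s) := by
            simpa using (tendsto_inv_atTop_zero.mul_const (u i)).const_add s
          exact ht.eventually (Icc_mem_nhds hs.1 hs.2)
        apply tendsto_const_nhds.congr'
        filter_upwards [hev] with K hK
        rw [Set.indicator_of_mem hK]
  apply main.congr'
  filter_upwards [Filter.eventually_gt_atTop 0] with K hK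
  rw [aux_fubini, ← MeasureTheory.integral_const_mul]
  congr 1
  ext s
  rw [aux_scale n lam K s hK]
end

section
/- Let N > 0, let L ≥ 2 be an integer, and let C ⊆ ℝⁿ be an (N, L−1)-multiple packing. Then for every P > 0: (i) the set C ∩ B̄(0, √(nP)) is finite; (ii) λ( ⋃_{x∈C} B̄(x, √(nN)) ∩ B̄(0, √(nP)) ) ≤ |C ∩ B̄(0, √(nP) + √(nN))| · λ(B̄(0, √(nN))); and (iii) λ( ⋃_{x∈C} B̄(x, √(nN)) ∩ B̄(0, √(nP)) ) ≥ (1/(L−1)) ∑_{x ∈ C ∩ B̄(0, √(nP))} λ( B̄(x, √(nN)) ∩ B̄(0, √(nP)) ), where λ is the n-dimensional Lebesgue measure. -/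
open MeasureTheory

lemma mp_finite (n L : ℕ) (N : ℝ) (hN : 0 < N) (C : Set (EuclideanSpace ℝ (Fin n)))
    (hC : ∀ y : EuclideanSpace ℝ (Fin n),
      {x ∈ C | y ∈ Metric.closedBall x (Real.sqrt (n * N))}.encard ≤ (L : ℕ∞) - 1) (R : ℝ) :
    (C ∩ Metric.closedBall 0 R).Finite := by
  rcases Nat.eq_zero_or_pos n with rfl | hn
  · exact Set.toFinite _
  have hr : 0 < Real.sqrt (n * N) := Real.sqrt_pos.2 (by positivity)
  have hc : IsCompact (Metric.closedBall (0 : EuclideanSpace ℝ (Fin n)) R) :=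
    isCompact_closedBall _ _
  obtain ⟨t, -, ht, hcov⟩ := hc.finite_cover_balls hr
  refine (ht.biUnion (t := fun y => {x ∈ C | y ∈ Metric.closedBall x (Real.sqrt (n * N))})
    (fun y _ => ?_)).subset ?_
  · refine Set.finite_of_encard_le_coe (k := L) ((hC y).trans tsub_le_self)
  · rintro x ⟨hx, hxR⟩
    obtain ⟨y, hy, hxy⟩ := Set.mem_iUnion₂.1 (hcov hxR)
    refine Set.mem_iUnion₂.2 ⟨y, hy, hx, ?_⟩
    rw [Metric.mem_closedBall, dist_comm]
    exact (Metric.mem_ball.1 hxy).le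

/-- For an `(N, L-1)`-multiple packing `C ⊆ ℝⁿ` (every point lies in at
most `L - 1` of the closed balls of radius `√(nN)` around points of `C`) and every
`P > 0`: (i) `C ∩ B̄(0, √(nP))` is finite; (ii) the volume of
`⋃_{x ∈ C} (B̄(x, √(nN)) ∩ B̄(0, √(nP)))` is at most
`|C ∩ B̄(0, √(nP) + √(nN))| · vol(B̄(0, √(nN)))`; and (iii) it is at least
`1/(L-1)` times `∑_{x ∈ C ∩ B̄(0, √(nP))} vol(B̄(x, √(nN)) ∩ B̄(0, √(nP)))`. -/
theorem multiple_packing_volume_bounds (n L : ℕ) (hL : 2 ≤ L) (N P : ℝ)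
    (hN : 0 < N) (hP : 0 < P) (C : Set (EuclideanSpace ℝ (Fin n)))
    (hC : ∀ y : EuclideanSpace ℝ (Fin n),
      {x ∈ C | y ∈ Metric.closedBall x (Real.sqrt (n * N))}.encard ≤ (L : ℕ∞) - 1) :
    (C ∩ Metric.closedBall 0 (Real.sqrt (n * P))).Finite ∧
    volume (⋃ x ∈ C,
        Metric.closedBall x (Real.sqrt (n * N)) ∩ Metric.closedBall 0 (Real.sqrt (n * P)))
      ≤ ((C ∩ Metric.closedBall 0 (Real.sqrt (n * P) + Real.sqrt (n * N))).encard :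
            ENNReal) *
        volume (Metric.closedBall (0 : EuclideanSpace ℝ (Fin n)) (Real.sqrt (n * N))) ∧
    ((L : ENNReal) - 1)⁻¹ *
        ∑' x : ↥(C ∩ Metric.closedBall 0 (Real.sqrt (n * P))),
          volume (Metric.closedBall (x : EuclideanSpace ℝ (Fin n)) (Real.sqrt (n * N))
            ∩ Metric.closedBall 0 (Real.sqrt (n * P)))
      ≤ volume (⋃ x ∈ C,
          Metric.closedBall x (Real.sqrt (n * N))
            ∩ Metric.closedBall 0 (Real.sqrt (n * P))) := by
  have hfin := mp_finite n L N hN C hC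
  refine ⟨hfin _, ?_, ?_⟩
  · have hF := hfin (Real.sqrt (n * P) + Real.sqrt (n * N))
    have hsub : (⋃ x ∈ C, Metric.closedBall x (Real.sqrt (n * N)) ∩
        Metric.closedBall 0 (Real.sqrt (n * P))) ⊆
        ⋃ x ∈ hF.toFinset, Metric.closedBall x (Real.sqrt (n * N)) := by
      intro y hy
      obtain ⟨x, hx, hy1, hy2⟩ := Set.mem_iUnion₂.1 hy
      refine Set.mem_iUnion₂.2 ⟨x, ?_, hy1⟩
      rw [Set.Finite.mem_toFinset]
      refine ⟨hx, ?_⟩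
      rw [Metric.mem_closedBall] at *
      have := dist_triangle_left x 0 y
      linarith
    refine (measure_mono hsub).trans ((measure_biUnion_finset_le _ _).trans ?_)
    simp only [Measure.addHaar_closedBall_center, Finset.sum_const, nsmul_eq_mul]
    rw [hF.encard_eq_coe_toFinset_card]
    simp
  · have hF := hfin (Real.sqrt (n * P))
    set F := hF.toFinset with hFdef
    have hL1 : ((L : ENNReal) - 1) = ((L - 1 : ℕ) : ENNReal) := by
      push_cast; rfl
    set A : EuclideanSpace ℝ (Fin n) → Set (EuclideanSpace ℝ (Fin n)) := fun x =>
      Metric.closedBall x (Real.sqrt (n * N)) ∩ Metric.closedBall 0 (Real.sqrt (n * P)) with hA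
    have hAm : ∀ x, MeasurableSet (A x) := fun x =>
      measurableSet_closedBall.inter measurableSet_closedBall
    have hUm : MeasurableSet (⋃ x ∈ F, A x) := F.measurableSet_biUnion fun x _ => hAm x
    have hsum : ∑' x : ↥(C ∩ Metric.closedBall 0 (Real.sqrt (n * P))), volume (A x)
        = ∑ x ∈ F, volume (A x) := by
      have h := F.tsum_subtype (fun x => volume (A x))
      rw [← h]
      exact (Equiv.setCongr (Set.Finite.coe_toFinset hF).symm).tsum_eq
        (fun x : ↥(F : Set (EuclideanSpace ℝ (Fin n))) => volume (A x))
    have key : ∑ x ∈ F, volume (A x) ≤ ((L - 1 : ℕ) : ENNReal) * volume (⋃ x ∈ F, A x) := by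
      classical
      calc ∑ x ∈ F, volume (A x) = ∑ x ∈ F, ∫⁻ y, (A x).indicator 1 y := by
            simp only [lintegral_indicator_one (hAm _)]
        _ = ∫⁻ y, ∑ x ∈ F, (A x).indicator 1 y := by
            rw [lintegral_finsetSum]
            exact fun x _ => measurable_one.indicator (hAm x)
        _ ≤ ∫⁻ y, (⋃ x ∈ F, A x).indicator (fun _ => ((L - 1 : ℕ) : ENNReal)) y := by
            refine lintegral_mono fun y => ?_
            by_cases hy : y ∈ ⋃ x ∈ F, A x
            · rw [Set.indicator_of_mem hy]
              simp only [Set.indicator_apply, Pi.one_apply]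
              have h1 : ((F.filter fun x => y ∈ A x : Finset _) :
                  Set (EuclideanSpace ℝ (Fin n))) ⊆
                  {x ∈ C | y ∈ Metric.closedBall x (Real.sqrt (n * N))} := by
                intro x hx
                rw [Finset.mem_coe, Finset.mem_filter, hFdef, Set.Finite.mem_toFinset] at hx
                exact ⟨hx.1.1, hx.2.1⟩
              have h2 := (Set.encard_le_encard h1).trans (hC y)
              rw [Set.encard_coe_eq_coe_finsetCard] at h2
              have h3 : (F.filter fun x => y ∈ A x).card ≤ L - 1 := by exact_mod_cast h2
              rw [Finset.card_filter] at h3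
              exact_mod_cast h3
            · rw [Set.indicator_of_notMem hy]
              refine (Finset.sum_eq_zero fun x hx => Set.indicator_of_notMem ?_ _).le
              exact fun h => hy (Set.mem_iUnion₂.2 ⟨x, hx, h⟩)
        _ = _ := lintegral_indicator_const hUm _
    have hmono : volume (⋃ x ∈ F, A x) ≤ volume (⋃ x ∈ C, A x) := by
      refine measure_mono (Set.biUnion_subset_biUnion_left fun x hx => ?_)
      exact ((Set.Finite.mem_toFinset hF).1 hx).1
    change ((L : ENNReal) - 1)⁻¹ *
      ∑' x : ↥(C ∩ Metric.closedBall 0 (Real.sqrt (n * P))), volume (A x) ≤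
        volume (⋃ x ∈ C, A x)
    rw [hsum, hL1]
    have h0 : ((L - 1 : ℕ) : ENNReal) ≠ 0 := by
      rw [Nat.cast_ne_zero]; omega
    calc _ ≤ ((L - 1 : ℕ) : ENNReal)⁻¹ * (((L - 1 : ℕ) : ENNReal) * volume (⋃ x ∈ F, A x)) := by
          gcongr
      _ = volume (⋃ x ∈ F, A x) := by
          rw [← mul_assoc, ENNReal.inv_mul_cancel h0 (ENNReal.natCast_ne_top _), one_mul]
      _ ≤ _ := hmono
end

section
/- Let N > 0, let L ≥ 2 be an integer, let K > 0 and g > √(nN), and let C₀ ⊆ [−K, K]^n be a finite set such that every L-element subset of C₀ has Chebyshev radius strictly greater than √(nN). Then the periodic set C := { c + 2(K+g)·v : c ∈ C₀, v ∈ ℤⁿ } has the property that every set of L pairwise distinct points of C has Chebyshev radius strictly greater than √(nN); equivalently, C is an (N, L−1)-multiple packing. -/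
/-- If every `L`-element subset of a finite set `C₀ ⊆ [-K, K]^n` has
Chebyshev radius `rad = ⨅ y, ⨆ i, ‖x i - y‖` greater than `√(nN)`, and `g > √(nN)`,
then the periodic set `C = C₀ + 2(K+g)·ℤⁿ` also has the property that every `L`
pairwise distinct points of it have Chebyshev radius greater than `√(nN)`;
equivalently, `C` is an `(N, L-1)`-multiple packing. -/
theorem tiling_preserves_multiple_packing (n L : ℕ) (hL : 2 ≤ L) (N K g : ℝ)
    (hN : 0 < N) (hK : 0 < K) (hg : Real.sqrt (n * N) < g)
    (C₀ : Finset (EuclideanSpace ℝ (Fin n)))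
    (hC₀sub : ∀ c ∈ C₀, ∀ j, c j ∈ Set.Icc (-K) K)
    (hC₀rad : ∀ x : Fin L → EuclideanSpace ℝ (Fin n), Function.Injective x →
      (∀ i, x i ∈ C₀) →
      Real.sqrt (n * N) < ⨅ y : EuclideanSpace ℝ (Fin n), ⨆ i, ‖x i - y‖) :
    (∀ x : Fin L → EuclideanSpace ℝ (Fin n), Function.Injective x →
      (∀ i, ∃ c ∈ C₀, ∃ v : Fin n → ℤ, ∀ j, x i j = c j + 2 * (K + g) * (v j : ℝ)) →
      Real.sqrt (n * N) < ⨅ y : EuclideanSpace ℝ (Fin n), ⨆ i, ‖x i - y‖) ∧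
    (∀ y : EuclideanSpace ℝ (Fin n),
      {p : EuclideanSpace ℝ (Fin n) |
          (∃ c ∈ C₀, ∃ v : Fin n → ℤ, ∀ j, p j = c j + 2 * (K + g) * (v j : ℝ)) ∧
          y ∈ Metric.closedBall p (Real.sqrt (n * N))}.encard ≤ (L : ℕ∞) - 1) := by
  have key : ∀ x : Fin L → EuclideanSpace ℝ (Fin n), Function.Injective x →
      (∀ i, ∃ c ∈ C₀, ∃ v : Fin n → ℤ, ∀ j, x i j = c j + 2 * (K + g) * (v j : ℝ)) →
      Real.sqrt (n * N) < ⨅ y : EuclideanSpace ℝ (Fin n), ⨆ i, ‖x i - y‖ := by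
    intro x hx h
    choose c hc v hv using h
    have hg0 : 0 < g := lt_of_le_of_lt (Real.sqrt_nonneg _) hg
    by_cases hall : ∀ i i', v i = v i'
    · let i0 : Fin L := ⟨0, by omega⟩
      let t : EuclideanSpace ℝ (Fin n) := WithLp.toLp 2 (fun j => 2 * (K + g) * (v i0 j : ℝ))
      have hxt : ∀ i, x i = c i + t := by
        intro i
        ext j
        rw [hv i j, hall i i0]
        simp [t]
      have hcinj : Function.Injective c := by
        intro a b hab
        apply hx
        rw [hxt, hxt, hab]
      refine lt_of_lt_of_le (hC₀rad c hcinj hc) ?_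
      apply le_ciInf
      intro y
      have hb : BddBelow (Set.range fun y : EuclideanSpace ℝ (Fin n) => ⨆ i, ‖c i - y‖) := by
        refine ⟨0, ?_⟩
        rintro _ ⟨z, rfl⟩
        exact Real.iSup_nonneg fun i => norm_nonneg _
      refine (ciInf_le hb (y - t)).trans (le_of_eq ?_)
      congr 1
      ext i
      rw [hxt]
      congr 1
      abel
    · push Not at hall
      obtain ⟨a, b, hab⟩ := hall
      obtain ⟨j, hj⟩ := Function.ne_iff.mp hab
      refine lt_of_lt_of_le hg (le_ciInf fun y => ?_)
      have hbd : BddAbove (Set.range fun i => ‖x i - y‖) := Set.finite_range _ |>.bddAbove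
      have ha := le_ciSup hbd a
      have hb := le_ciSup hbd b
      have h1 : |x a j - x b j| ≤ ‖x a - x b‖ := by
        have := PiLp.norm_apply_le (x a - x b) j
        simpa using this
      have h2 : ‖x a - x b‖ ≤ ‖x a - y‖ + ‖x b - y‖ := by
        have := norm_sub_le (x a - y) (x b - y)
        simpa using this
      have h3 : 2 * g ≤ |x a j - x b j| := by
        have ca := hC₀sub _ (hc a) j
        have cb := hC₀sub _ (hc b) j
        rw [hv a j, hv b j]
        rcases lt_or_gt_of_ne hj with hlt | hlt
        · have : (v a j : ℝ) + 1 ≤ v b j := by exact_mod_cast hlt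
          rw [le_abs]
          right
          nlinarith [ca.1, ca.2, cb.1, cb.2, mul_le_mul_of_nonneg_left this (by linarith : 0 ≤ 2 * (K + g))]
        · have : (v b j : ℝ) + 1 ≤ v a j := by exact_mod_cast hlt
          rw [le_abs]
          left
          nlinarith [ca.1, ca.2, cb.1, cb.2, mul_le_mul_of_nonneg_left this (by linarith : 0 ≤ 2 * (K + g))]
      linarith
  refine ⟨key, fun y => ?_⟩
  by_contra hcon
  rw [not_le] at hcon
  have hle : (L : ℕ∞) ≤ Set.encard {p : EuclideanSpace ℝ (Fin n) |
          (∃ c ∈ C₀, ∃ v : Fin n → ℤ, ∀ j, p j = c j + 2 * (K + g) * (v j : ℝ)) ∧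
          y ∈ Metric.closedBall p (Real.sqrt (n * N))} := by
    have h := Order.add_one_le_of_lt hcon
    have h1 : ((L : ℕ∞) - 1) + 1 = L := tsub_add_cancel_of_le (by exact_mod_cast (by omega : 1 ≤ L))
    rwa [h1] at h
  obtain ⟨T, hTs, hT⟩ := Set.exists_subset_encard_eq hle
  have hTfin : T.Finite := Set.finite_of_encard_eq_coe hT
  have hcard : Nat.card T = L := by
    have : T.ncard = L := by rw [Set.ncard, hT]; rfl
    exact this
  have := hTfin.to_subtype
  let e : Fin L ≃ T := (Finite.equivFinOfCardEq hcard).symm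
  have hlt := key (fun i => (e i : EuclideanSpace ℝ (Fin n)))
    (Subtype.val_injective.comp e.injective) (fun i => (hTs (e i).2).1)
  have hb : BddBelow (Set.range fun y : EuclideanSpace ℝ (Fin n) =>
      ⨆ i, ‖(e i : EuclideanSpace ℝ (Fin n)) - y‖) := by
    refine ⟨0, ?_⟩
    rintro _ ⟨z, rfl⟩
    exact Real.iSup_nonneg fun i => norm_nonneg _
  refine absurd (hlt.trans_le (ciInf_le hb y)) (not_lt.mpr ?_)
  refine Real.iSup_le (fun i => ?_) (Real.sqrt_nonneg _)
  have := (hTs (e i).2).2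
  rwa [Metric.mem_closedBall, dist_comm, dist_eq_norm] at this
end

section
/- Let N > 0, let L ≥ 2 be an integer, and let ε > 0. Then there exists n₀ such that for every n ≥ n₀ there exist K > 0 and a finite set C ⊆ [−K, K]^n ⊆ ℝⁿ such that every L-element subset of C has average squared radius strictly greater than nN, and the normalized logarithmic density satisfies (1/n)·ln( |C| / (2K)^n ) ≥ (1/2)·ln( (L−1)/(2πeNL) ) − (ln L)/(2(L−1)) − ε. -/
open MeasureTheory ProbabilityTheory
open scoped ENNReal

theorem aux_lintegral_pi_prod {ι κ α : Type*} [Fintype ι] [Fintype κ] [MeasurableSpace α]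
    (μ : Measure α) [IsProbabilityMeasure μ] (e : κ → ι) (he : Function.Injective e)
    (f : α → ℝ≥0∞) (hf : Measurable f) :
    ∫⁻ Y, ∏ i, f (Y (e i)) ∂(Measure.pi fun _ : ι => μ) = (∫⁻ y, f y ∂μ) ^ (Fintype.card κ) := by
  have h1 : iIndepFun (fun i (Y : ι → α) => f (Y i)) (Measure.pi fun _ : ι => μ) :=
    iIndepFun_pi (X := fun _ => f) (fun _ => hf.aemeasurable)
  have h2 := h1.precomp he
  have h3 := lintegral_prod_eq_prod_lintegral_of_indepFun Finset.univ
    (fun i (Y : ι → α) => f (Y (e i))) h2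
    (fun i => hf.comp (measurable_pi_apply _))
  rw [h3]
  have : ∀ i, ∫⁻ Y, f (Y (e i)) ∂(Measure.pi fun _ : ι => μ) = ∫⁻ y, f y ∂μ := fun i =>
    (measurePreserving_eval (fun _ : ι => μ) (e i)).lintegral_comp hf
  simp [this]

theorem aux_gauss_s18 (s : ℝ) (hs : 0 < s) (c : ℝ) :
    ∫⁻ t : ℝ, ENNReal.ofReal (Real.exp (-s * (t - c) ^ 2)) = ENNReal.ofReal (√(Real.pi / s)) := by
  rw [← integral_gaussian s, ofReal_integral_eq_lintegral_ofReal (integrable_exp_neg_mul_sq hs)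
    (Filter.Eventually.of_forall fun _ => (Real.exp_pos _).le)]
  exact lintegral_sub_right_eq_self (fun t => ENNReal.ofReal (Real.exp (-s * t ^ 2))) c

noncomputable def auxq {L : ℕ} (y : Fin L → ℝ) : ℝ := ∑ i, (y i - (L : ℝ)⁻¹ * ∑ k, y k) ^ 2

theorem auxq_split {L : ℕ} (hL : 0 < L) (y : Fin L → ℝ) (t : ℝ) :
    ∑ i, (y i - t) ^ 2 = auxq y + L * (t - (L : ℝ)⁻¹ * ∑ k, y k) ^ 2 := by
  unfold auxq
  set m := (L : ℝ)⁻¹ * ∑ k, y k with hm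
  have hS : ∑ k, y k = L * m := by rw [hm]; field_simp
  simp only [sub_sq, Finset.sum_add_distrib, Finset.sum_sub_distrib, ← Finset.sum_mul,
    ← Finset.mul_sum, hS]
  simp
  ring

theorem auxq_measurable {L : ℕ} : Measurable (auxq : (Fin L → ℝ) → ℝ) := by
  unfold auxq; fun_prop

/-- Hubbard-Stratonovich representation. -/
theorem aux_hs {L : ℕ} (hL : 0 < L) (s : ℝ) (hs : 0 < s) (y : Fin L → ℝ) :
    ENNReal.ofReal (√(s * L / Real.pi)) *
      ∫⁻ t : ℝ, ∏ i, ENNReal.ofReal (Real.exp (-s * (t - y i) ^ 2)) =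
    ENNReal.ofReal (Real.exp (-s * auxq y)) := by
  have hL' : (0 : ℝ) < L := by exact_mod_cast hL
  have h1 : ∀ t : ℝ, ∏ i, ENNReal.ofReal (Real.exp (-s * (t - y i) ^ 2)) =
      ENNReal.ofReal (Real.exp (-s * auxq y)) *
        ENNReal.ofReal (Real.exp (-(s * L) * (t - (L : ℝ)⁻¹ * ∑ k, y k) ^ 2)) := by
    intro t
    rw [← ENNReal.ofReal_prod_of_nonneg (fun _ _ => (Real.exp_pos _).le), ← Real.exp_sum,
      ← ENNReal.ofReal_mul (Real.exp_pos _).le, ← Real.exp_add, ← Finset.mul_sum]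
    congr 2
    have := auxq_split hL y t
    have h2 : ∑ i, (t - y i) ^ 2 = ∑ i, (y i - t) ^ 2 :=
      Finset.sum_congr rfl fun i _ => by ring
    rw [h2, this]; ring
  simp_rw [h1]
  rw [lintegral_const_mul _ (by fun_prop), aux_gauss_s18 _ (by positivity), mul_left_comm,
    ← ENNReal.ofReal_mul (by positivity), ← Real.sqrt_mul (by positivity)]
  have : s * L / Real.pi * (Real.pi / (s * L)) = 1 := by
    have := Real.pi_pos; field_simp
  simp [this]

noncomputable def auxμ (K : ℝ) : Measure ℝ :=
  ENNReal.ofReal (2 * K)⁻¹ • volume.restrict (Set.Icc (-K) K)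

theorem auxμ_prob (K : ℝ) (hK : 0 < K) : IsProbabilityMeasure (auxμ K) := by
  constructor
  simp only [auxμ, Measure.smul_apply, Measure.restrict_apply MeasurableSet.univ, Set.univ_inter,
    Real.volume_Icc, smul_eq_mul]
  rw [← ENNReal.ofReal_mul (by positivity)]
  have : (2 * K)⁻¹ * (K - -K) = 1 := by field_simp; ring
  rw [this, ENNReal.ofReal_one]

theorem auxμ_ae (K : ℝ) : ∀ᵐ y ∂(auxμ K), y ∈ Set.Icc (-K) K :=
  Measure.ae_smul_measure (ae_restrict_mem measurableSet_Icc) _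

theorem auxμ_le (K s : ℝ) (hK : 0 < K) (hs : 0 < s) (t : ℝ) :
    ∫⁻ y, ENNReal.ofReal (Real.exp (-s * (t - y) ^ 2)) ∂(auxμ K) ≤
      ENNReal.ofReal ((2 * K)⁻¹ * √(Real.pi / s)) := by
  rw [auxμ, lintegral_smul_measure, ENNReal.ofReal_mul (by positivity), smul_eq_mul]
  gcongr
  refine (setLIntegral_le_lintegral _ _).trans ?_
  rw [← aux_gauss_s18 s hs t]
  refine le_of_eq (lintegral_congr fun y => ?_)
  congr 3; ring

/-- One-coordinate bound. -/
theorem aux_coord {L M : ℕ} (hL : 0 < L) (K s : ℝ) (hK : 0 < K) (hs : 0 < s)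
    (e : Fin L → Fin M) (he : Function.Injective e) :
    ∫⁻ Y, ENNReal.ofReal (Real.exp (-s * auxq (fun i => Y (e i))))
        ∂(Measure.pi fun _ : Fin M => auxμ K) ≤
      ENNReal.ofReal (√L * ((2 * K)⁻¹ * √(Real.pi / s)) ^ (L - 1)) := by
  have := auxμ_prob K hK
  simp_rw [← aux_hs hL s hs]
  have hm : Measurable (Function.uncurry fun (Y : Fin M → ℝ) (t : ℝ) =>
      ∏ i, ENNReal.ofReal (Real.exp (-s * (t - Y (e i)) ^ 2))) := by
    unfold Function.uncurry; fun_prop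
  rw [lintegral_const_mul _ hm.lintegral_prod_right, lintegral_lintegral_swap hm.aemeasurable]
  have h1 : ∀ t : ℝ, ∫⁻ Y, ∏ i, ENNReal.ofReal (Real.exp (-s * (t - Y (e i)) ^ 2))
        ∂(Measure.pi fun _ : Fin M => auxμ K) =
      (∫⁻ y, ENNReal.ofReal (Real.exp (-s * (t - y) ^ 2)) ∂(auxμ K)) ^ L := fun t => by
    have := aux_lintegral_pi_prod (auxμ K) e he
      (fun y => ENNReal.ofReal (Real.exp (-s * (t - y) ^ 2))) (by fun_prop)
    simpa using this
  simp_rw [h1]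
  have hm2 : Measurable (Function.uncurry fun (t y : ℝ) =>
      ENNReal.ofReal (Real.exp (-s * (t - y) ^ 2))) := by
    unfold Function.uncurry; fun_prop
  have h2 : ∫⁻ t : ℝ, (∫⁻ y, ENNReal.ofReal (Real.exp (-s * (t - y) ^ 2)) ∂(auxμ K)) ^ L ≤
      ENNReal.ofReal ((2 * K)⁻¹ * √(Real.pi / s)) ^ (L - 1) * ENNReal.ofReal (√(Real.pi / s)) := by
    calc _ ≤ ∫⁻ t : ℝ, ENNReal.ofReal ((2 * K)⁻¹ * √(Real.pi / s)) ^ (L - 1) *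
          ∫⁻ y, ENNReal.ofReal (Real.exp (-s * (t - y) ^ 2)) ∂(auxμ K) := by
          refine lintegral_mono fun t => ?_
          obtain ⟨l, rfl⟩ : ∃ l, L = l + 1 := ⟨L - 1, by omega⟩
          simp only [pow_succ, Nat.add_sub_cancel]
          gcongr
          exact auxμ_le K s hK hs t
      _ = _ := by
          rw [lintegral_const_mul _ hm2.lintegral_prod_right,
            lintegral_lintegral_swap hm2.aemeasurable]
          simp only [aux_gauss_s18 s hs, lintegral_const, measure_univ, mul_one]
  refine (mul_le_mul_right h2 _).trans ?_
  rw [← ENNReal.ofReal_pow (by positivity), ← ENNReal.ofReal_mul (by positivity),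
    ← ENNReal.ofReal_mul (by positivity)]
  refine le_of_eq ?_
  congr 1
  have h3 : √(s * L / Real.pi) * √(Real.pi / s) = √L := by
    rw [← Real.sqrt_mul (by positivity)]
    congr 1
    have := Real.pi_pos; field_simp
  rw [← h3]; ring

theorem aux_exists {L M n : ℕ} (hL : 0 < L) (K s N : ℝ) (hK : 0 < K) (hs : 0 < s) :
    ∃ X : Fin n → Fin M → ℝ, (∀ j i, X j i ∈ Set.Icc (-K) K) ∧
      ∑ e : Fin L ↪ Fin M, Real.exp (s * (n * N * L) - s * ∑ j, auxq (fun i => X j (e i))) ≤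
        (M : ℝ) ^ L * (Real.exp (s * N * L) * (√L * ((2 * K)⁻¹ * √(Real.pi / s)) ^ (L - 1))) ^ n := by
  have := auxμ_prob K hK
  set P : Measure (Fin n → Fin M → ℝ) := Measure.pi fun _ => Measure.pi fun _ => auxμ K with hP
  set B : ℝ := √L * ((2 * K)⁻¹ * √(Real.pi / s)) ^ (L - 1) with hB
  have hB0 : 0 ≤ B := by positivity
  have hqm : ∀ e : Fin L ↪ Fin M, Measurable fun Y : Fin M → ℝ => auxq (fun i => Y (e i)) :=
    fun e => auxq_measurable.comp (by fun_prop)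
  have hmeas : ∀ e : Fin L ↪ Fin M, Measurable fun X : Fin n → Fin M → ℝ =>
      ENNReal.ofReal (Real.exp (s * (n * N * L) - s * ∑ j, auxq (fun i => X j (e i)))) := by
    intro e
    have h : ∀ j, Measurable fun X : Fin n → Fin M → ℝ => auxq (fun i => X j (e i)) :=
      fun j => (hqm e).comp (measurable_pi_apply j)
    fun_prop
  have hae : ∀ᵐ X ∂P, ∀ j i, X j i ∈ Set.Icc (-K) K := by
    rw [ae_all_iff]; intro j
    rw [ae_all_iff]; intro i
    have h1 : ∀ᵐ Y ∂(Measure.pi fun _ : Fin M => auxμ K), Y i ∈ Set.Icc (-K) K :=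
      Measure.tendsto_eval_ae_ae.eventually (auxμ_ae K)
    exact (Measure.tendsto_eval_ae_ae (μ := fun _ : Fin n => Measure.pi fun _ : Fin M => auxμ K)
      (i := j)).eventually h1
  have hterm : ∀ e : Fin L ↪ Fin M, ∫⁻ X, ENNReal.ofReal
      (Real.exp (s * (n * N * L) - s * ∑ j, auxq (fun i => X j (e i)))) ∂P ≤
      ENNReal.ofReal ((Real.exp (s * N * L) * B) ^ n) := by
    intro e
    have h1 : ∀ X : Fin n → Fin M → ℝ, ENNReal.ofReal
        (Real.exp (s * (n * N * L) - s * ∑ j, auxq (fun i => X j (e i)))) =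
        ENNReal.ofReal (Real.exp (s * N * L) ^ n) *
          ∏ j, ENNReal.ofReal (Real.exp (-s * auxq (fun i => X j (e i)))) := by
      intro X
      rw [← ENNReal.ofReal_prod_of_nonneg (fun _ _ => (Real.exp_pos _).le), ← Real.exp_sum,
        ← ENNReal.ofReal_mul (by positivity), ← Real.exp_nat_mul, ← Real.exp_add, ← Finset.mul_sum]
      congr 2; ring
    simp_rw [h1]
    have hm1 : Measurable fun Y : Fin M → ℝ =>
        ENNReal.ofReal (Real.exp (-s * auxq (fun i => Y (e i)))) := by
      have := hqm e
      fun_prop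
    rw [lintegral_const_mul' _ _ ENNReal.ofReal_ne_top]
    have h2 := aux_lintegral_pi_prod (Measure.pi fun _ : Fin M => auxμ K) (id : Fin n → Fin n)
      Function.injective_id _ hm1
    simp only [id] at h2
    rw [hP, h2, mul_pow, ENNReal.ofReal_mul (by positivity), Fintype.card_fin,
      ENNReal.ofReal_pow hB0]
    gcongr
    exact aux_coord hL K s hK hs e e.injective
  obtain ⟨X, hX, hXle⟩ := exists_notMem_null_le_lintegral (μ := P)
    (f := fun X => ∑ e : Fin L ↪ Fin M, ENNReal.ofReal
      (Real.exp (s * (n * N * L) - s * ∑ j, auxq (fun i => X j (e i)))))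
    (Finset.measurable_fun_sum _ fun e _ => hmeas e).aemeasurable (ae_iff.1 hae)
  refine ⟨X, by simpa using hX, ?_⟩
  rw [lintegral_finsetSum _ fun e _ => hmeas e] at hXle
  have h3 := hXle.trans (Finset.sum_le_sum fun e _ => hterm e)
  rw [← ENNReal.ofReal_sum_of_nonneg (fun _ _ => (Real.exp_pos _).le)] at h3
  simp only [Finset.sum_const, nsmul_eq_mul] at h3
  rw [← ENNReal.ofReal_natCast, ← ENNReal.ofReal_mul (by positivity),
    ENNReal.ofReal_le_ofReal_iff (by positivity)] at h3
  refine h3.trans ?_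
  gcongr
  rw [Finset.card_univ, Fintype.card_embedding_eq]
  simp only [Fintype.card_fin]
  exact_mod_cast Nat.descFactorial_le_pow M L

theorem aux_norm {L n : ℕ} (x : Fin L → EuclideanSpace ℝ (Fin n)) :
    ∑ i, ‖x i - (L : ℝ)⁻¹ • ∑ i, x i‖ ^ 2 = ∑ j, auxq (fun i => x i j) := by
  simp only [EuclideanSpace.norm_sq_eq, auxq]
  rw [Finset.sum_comm]
  simp

theorem aux_code {L M n : ℕ} (hL : 2 ≤ L) (K s N : ℝ) (hs : 0 < s) (hN : 0 < N)
    (X : Fin n → Fin M → ℝ) (hX : ∀ j i, X j i ∈ Set.Icc (-K) K)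
    (hsum : ∑ e : Fin L ↪ Fin M,
      Real.exp (s * (n * N * L) - s * ∑ j, auxq (fun i => X j (e i))) ≤ (M : ℝ) / 2) :
    ∃ C : Finset (EuclideanSpace ℝ (Fin n)),
      (∀ c ∈ C, ∀ j, c j ∈ Set.Icc (-K) K) ∧
      (∀ x : Fin L → EuclideanSpace ℝ (Fin n), Function.Injective x →
        (∀ i, x i ∈ C) →
        (n : ℝ) * N < (L : ℝ)⁻¹ * ∑ i, ‖x i - (L : ℝ)⁻¹ • ∑ i, x i‖ ^ 2) ∧
      (M : ℝ) / 2 ≤ L * C.card := by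
  classical
  have hL0 : (0 : ℝ) < L := by exact_mod_cast (by omega : 0 < L)
  let bad : Finset (Fin L ↪ Fin M) :=
    Finset.univ.filter fun e => ∑ j, auxq (fun i => X j (e i)) ≤ n * N * L
  let i0 : Fin L := ⟨0, by omega⟩
  let D : Finset (Fin M) := bad.image fun e => e i0
  let S : Finset (Fin M) := Finset.univ \ D
  let c : Fin M → EuclideanSpace ℝ (Fin n) := fun i => WithLp.toLp 2 fun j => X j i
  have hgood : ∀ e : Fin L ↪ Fin M, (∀ i, e i ∈ S) →
      n * N * L < ∑ j, auxq (fun i => X j (e i)) := by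
    intro e he
    by_contra! h
    have h1 : e i0 ∈ D := Finset.mem_image_of_mem (fun e : Fin L ↪ Fin M => e i0)
      (Finset.mem_filter.2 ⟨Finset.mem_univ e, h⟩)
    exact (Finset.mem_sdiff.1 (he i0)).2 h1
  have hbad : (bad.card : ℝ) ≤ M / 2 := by
    refine le_trans ?_ hsum
    calc (bad.card : ℝ) = ∑ e ∈ bad, (1 : ℝ) := by simp
      _ ≤ ∑ e ∈ bad, Real.exp (s * (n * N * L) - s * ∑ j, auxq (fun i => X j (e i))) := by
          refine Finset.sum_le_sum fun e he => Real.one_le_exp ?_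
          rw [← mul_sub]
          exact mul_nonneg hs.le (sub_nonneg.2 (Finset.mem_filter.1 he).2)
      _ ≤ _ := Finset.sum_le_sum_of_subset_of_nonneg (Finset.subset_univ _)
          fun _ _ _ => (Real.exp_pos _).le
  have hS : (M : ℝ) / 2 ≤ S.card := by
    have h1 : M ≤ S.card + bad.card := by
      have h2 : D.card ≤ bad.card := Finset.card_image_le
      have h3 := Finset.le_card_sdiff D (Finset.univ : Finset (Fin M))
      simp only [Finset.card_univ, Fintype.card_fin] at h3
      have h4 : M - D.card ≤ S.card := h3
      omega
    have h2 : (M : ℝ) ≤ S.card + bad.card := by exact_mod_cast h1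
    linarith
  refine ⟨S.image c, ?_, ?_, ?_⟩
  · intro x hx j
    obtain ⟨i, -, rfl⟩ := Finset.mem_image.1 hx
    exact hX j i
  · intro x hx hmem
    have h1 : ∀ i, ∃ k ∈ S, c k = x i := fun i => Finset.mem_image.1 (hmem i)
    choose e heS hex using h1
    have hinj : Function.Injective e := fun a b hab => hx (by rw [← hex, ← hex, hab])
    have h2 := hgood ⟨e, hinj⟩ heS
    rw [aux_norm, lt_inv_mul_iff₀ hL0]
    refine lt_of_eq_of_lt (by ring) (h2.trans_eq ?_)
    refine Finset.sum_congr rfl fun j _ => ?_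
    congr 1
    funext i
    rw [← hex]
    rfl
  · have h1 : S.card ≤ L * (S.image c).card := by
      refine Finset.card_le_mul_card_image S L fun b _ => ?_
      by_contra! h
      obtain ⟨f⟩ : Nonempty (Fin L ↪ {a // a ∈ S.filter fun a => c a = b}) :=
        Function.Embedding.nonempty_of_card_le (by rw [Fintype.card_coe, Fintype.card_fin]; exact h.le)
      have h2 := hgood (f.trans (Function.Embedding.subtype _))
        fun i => (Finset.mem_filter.1 (f i).2).1
      have h3 : ∀ j, auxq (fun i => X j ((f.trans (Function.Embedding.subtype _)) i)) = 0 := by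
        intro j
        have h4 : ∀ i, X j ((f.trans (Function.Embedding.subtype _)) i) = b j := by
          intro i
          exact congrArg (fun v : EuclideanSpace ℝ (Fin n) => v j)
            (Finset.mem_filter.1 (f i).2).2
        simp only [h4, auxq]
        simp [hL0.ne']
      simp only [h3, Finset.sum_const_zero] at h2
      exact absurd h2 (not_lt.2 (by positivity))
    refine hS.trans ?_
    exact_mod_cast h1

/-- Choice of parameters. -/
theorem aux_param (L : ℕ) (hL : 2 ≤ L) (N : ℝ) (hN : 0 < N) (ν s : ℝ)
    (hν : ν = (1 / 2 : ℝ) * Real.log (((L : ℝ) - 1) / (2 * Real.pi * Real.exp 1 * N * L))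
              - Real.log L / (2 * ((L : ℝ) - 1)))
    (hs : s = ((L : ℝ) - 1) / (2 * N * L)) :
    Real.exp (s * N * L) * (√L * ((2 * Real.exp (-ν))⁻¹ * √(Real.pi / s)) ^ (L - 1))
      = (1 / 2) ^ (L - 1) := by
  obtain ⟨l, rfl⟩ : ∃ l, L = l + 1 := ⟨L - 1, by omega⟩
  have hl : (0 : ℝ) < l := by exact_mod_cast (by omega : 0 < l)
  have hπ := Real.pi_pos
  simp only [Nat.add_sub_cancel]
  push_cast at *
  have hl1 : (l : ℝ) + 1 - 1 = l := by ring
  rw [hl1] at hs hν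
  have hs0 : 0 < s := by rw [hs]; positivity
  have e1 : √(Real.pi / s) = Real.exp (1 / 2 * Real.log (Real.pi / s)) := by
    rw [Real.sqrt_eq_rpow, Real.rpow_def_of_pos (by positivity), mul_comm]
  have e2 : √((l : ℝ) + 1) = Real.exp (1 / 2 * Real.log ((l : ℝ) + 1)) := by
    rw [Real.sqrt_eq_rpow, Real.rpow_def_of_pos (by positivity), mul_comm]
  have e3 : (l : ℝ) / (2 * Real.pi * Real.exp 1 * N * (l + 1)) = (Real.exp 1)⁻¹ * (Real.pi / s)⁻¹ := by
    rw [hs]; field_simp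
  rw [e3, Real.log_mul (by positivity) (by positivity), Real.log_inv, Real.log_inv, Real.log_exp]
    at hν
  have e4 : (2 * Real.exp (-ν))⁻¹ = 1 / 2 * Real.exp ν := by
    rw [mul_inv, Real.exp_neg, inv_inv, one_div]
  rw [e1, e2, e4, mul_assoc (1 / 2 : ℝ), mul_pow, ← Real.exp_add, ← Real.exp_nat_mul]
  rw [mul_left_comm (Real.exp (1 / 2 * Real.log ((l : ℝ) + 1))), ← Real.exp_add, mul_left_comm,
    ← Real.exp_add]
  have : s * N * ((l : ℝ) + 1) + (1 / 2 * Real.log ((l : ℝ) + 1) + l * (ν + 1 / 2 * Real.log (Real.pi / s))) = 0 := by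
    have : s * N * ((l : ℝ) + 1) = l / 2 := by rw [hs]; field_simp
    rw [this, hν]
    field_simp
    ring
  rw [this, Real.exp_zero, mul_one]


/-- For `N > 0`, `L ≥ 2` and `ε > 0`, for all sufficiently large `n` there
exist `K > 0` and a finite `C ⊆ [-K, K]^n` such that every `L`-element subset of `C` has
average squared radius greater than `nN`, and the normalized logarithmic density
satisfies `(1/n) ln(|C| / (2K)^n) ≥ (1/2) ln((L-1)/(2πeNL)) - (ln L)/(2(L-1)) - ε`. -/
theorem finite_codebook_good_density (L : ℕ) (hL : 2 ≤ L) (N ε : ℝ)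
    (hN : 0 < N) (hε : 0 < ε) :
    ∃ n₀ : ℕ, ∀ n : ℕ, n₀ ≤ n →
      ∃ K : ℝ, 0 < K ∧
        ∃ C : Finset (EuclideanSpace ℝ (Fin n)),
          (∀ c ∈ C, ∀ j, c j ∈ Set.Icc (-K) K) ∧
          (∀ x : Fin L → EuclideanSpace ℝ (Fin n), Function.Injective x →
            (∀ i, x i ∈ C) →
            (n : ℝ) * N < (L : ℝ)⁻¹ * ∑ i, ‖x i - (L : ℝ)⁻¹ • ∑ i, x i‖ ^ 2) ∧
          (1 / 2 : ℝ) * Real.log (((L : ℝ) - 1) / (2 * Real.pi * Real.exp 1 * N * L))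
              - Real.log L / (2 * ((L : ℝ) - 1)) - ε
            ≤ (n : ℝ)⁻¹ * Real.log ((C.card : ℝ) / (2 * K) ^ n) := by
  have hL0 : (0 : ℝ) < L := by exact_mod_cast (by omega : 0 < L)
  have hL1 : (0 : ℝ) < (L : ℝ) - 1 := by
    have : (2 : ℝ) ≤ L := by exact_mod_cast hL
    linarith
  set ν : ℝ := (1 / 2 : ℝ) * Real.log (((L : ℝ) - 1) / (2 * Real.pi * Real.exp 1 * N * L))
              - Real.log L / (2 * ((L : ℝ) - 1)) with hν
  obtain ⟨m, hm⟩ := exists_nat_ge (Real.log (4 * L) / ε)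
  refine ⟨m + 1, fun n hn => ?_⟩
  have hn0 : (0 : ℝ) < n := by exact_mod_cast (by omega : 0 < n)
  set s : ℝ := ((L : ℝ) - 1) / (2 * N * L) with hs
  have hs0 : 0 < s := by positivity
  have hK : 0 < Real.exp (-ν) := Real.exp_pos _
  refine ⟨Real.exp (-ν), hK, ?_⟩
  obtain ⟨X, hX, hsum⟩ := aux_exists (L := L) (M := 2 ^ (n - 1)) (n := n) (by omega)
    (Real.exp (-ν)) s N hK hs0
  rw [aux_param L hL N hN ν s hν hs] at hsum
  have hbound : (((2 ^ (n - 1) : ℕ) : ℝ)) ^ L * ((1 / 2 : ℝ) ^ (L - 1)) ^ n ≤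
      ((2 ^ (n - 1) : ℕ) : ℝ) / 2 := by
    obtain ⟨l, rfl⟩ : ∃ l, L = l + 2 := ⟨L - 2, by omega⟩
    obtain ⟨k, rfl⟩ : ∃ k, n = k + 1 := ⟨n - 1, by omega⟩
    have e1 : l + 2 - 1 = l + 1 := by omega
    simp only [Nat.add_sub_cancel, e1]
    push_cast
    have e2 : ((2 : ℝ) ^ k) ^ (l + 2) * ((1 / 2 : ℝ) ^ (l + 1)) ^ (k + 1) =
        2 ^ k / 2 * (1 / 2) ^ l := by
      have e3 : ((1 / 2 : ℝ) ^ (l + 1)) ^ (k + 1) = ((2 ^ k) ^ (l + 1))⁻¹ * (1 / 2) ^ (l + 1) := by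
        rw [← pow_mul, ← pow_mul, one_div, inv_pow, inv_pow, ← mul_inv, ← pow_add]
        congr 2; ring
      rw [e3, pow_succ ((2 : ℝ) ^ k) (l + 1)]
      field_simp
      ring
    rw [e2]
    refine mul_le_of_le_one_right (by positivity) (pow_le_one₀ (by norm_num) (by norm_num))
  obtain ⟨C, hC1, hC2, hC3⟩ := aux_code hL (Real.exp (-ν)) s N hs0 hN X hX (hsum.trans hbound)
  refine ⟨C, hC1, hC2, ?_⟩
  have h4 : (2 : ℝ) ^ n / (4 * L) ≤ C.card := by
    obtain ⟨k, rfl⟩ : ∃ k, n = k + 1 := ⟨n - 1, by omega⟩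
    simp only [Nat.add_sub_cancel] at hC3
    push_cast at hC3
    rw [div_le_iff₀ (by positivity), pow_succ]
    linarith
  have h5 : Real.exp (n * ν) / (4 * L) ≤ (C.card : ℝ) / (2 * Real.exp (-ν)) ^ n := by
    rw [le_div_iff₀ (by positivity)]
    refine le_trans (le_of_eq ?_) h4
    rw [mul_pow, ← Real.exp_nat_mul, div_mul_eq_mul_div, mul_left_comm, ← Real.exp_add]
    have : (n : ℝ) * ν + n * -ν = 0 := by ring
    rw [this, Real.exp_zero, mul_one]
  have h6 := Real.log_le_log (by positivity) h5
  rw [Real.log_div (by positivity) (by positivity), Real.log_exp] at h6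
  have h7 : Real.log (4 * L) ≤ n * ε := by
    rw [div_le_iff₀ hε] at hm
    refine hm.trans ?_
    gcongr
    omega
  rw [le_inv_mul_iff₀ hn0]
  linarith
end

section
/- Let N > 0, let L ≥ 2 be an integer, and let ε > 0. Then there exists n₀ such that for every n ≥ n₀ there exist T > 0 and a finite set C₀ ⊆ [0, T)^n such that the periodic set C := { c + T·v : c ∈ C₀, v ∈ ℤⁿ } satisfies: (i) every set of L pairwise distinct points of C has average squared radius strictly greater than nN (in particular, C is an (N, L−1)-multiple packing); and (ii) the normalized logarithmic density satisfies (1/n)·ln( |C₀| / Tⁿ ) ≥ (1/2)·ln( (L−1)/(2πeNL) ) − (ln L)/(2(L−1)) − ε. -/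
section Helpers
open MeasureTheory ProbabilityTheory
open scoped ENNReal

noncomputable def spread {ι E : Type*} [NormedAddCommGroup E] [InnerProductSpace ℝ E]
    (S : Finset ι) (c : ι → E) : ℝ :=
  ∑ i ∈ S, ‖c i - (S.card : ℝ)⁻¹ • ∑ j ∈ S, c j‖ ^ 2

theorem sum_sq_eq_spread {ι E : Type*} [NormedAddCommGroup E] [InnerProductSpace ℝ E]
    (S : Finset ι) (hS : S.Nonempty) (c : ι → E) (y : E) :
    ∑ i ∈ S, ‖c i - y‖ ^ 2
      = spread S c + S.card * ‖y - (S.card : ℝ)⁻¹ • ∑ j ∈ S, c j‖ ^ 2 := by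
  set m := (S.card : ℝ)⁻¹ • ∑ j ∈ S, c j with hm
  have hc : (S.card : ℝ) ≠ 0 := by
    have := hS.card_pos
    positivity
  have h0 : ∑ i ∈ S, (c i - m) = 0 := by
    rw [Finset.sum_sub_distrib, Finset.sum_const, hm, ← Nat.cast_smul_eq_nsmul ℝ, smul_smul,
      mul_inv_cancel₀ hc, one_smul, sub_self]
  have h1 : ∀ i, ‖c i - y‖ ^ 2 = ‖c i - m‖ ^ 2 - 2 * inner ℝ (c i - m) (y - m) + ‖y - m‖ ^ 2 := by
    intro i
    rw [← norm_sub_sq_real]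
    congr 2
    abel
  simp only [h1]
  rw [Finset.sum_add_distrib, Finset.sum_sub_distrib, ← Finset.mul_sum, ← sum_inner, h0]
  simp [spread, ← hm]

theorem spread_le {ι E : Type*} [NormedAddCommGroup E] [InnerProductSpace ℝ E]
    (S : Finset ι) (hS : S.Nonempty) (c : ι → E) (y : E) :
    spread S c ≤ ∑ i ∈ S, ‖c i - y‖ ^ 2 := by
  rw [sum_sq_eq_spread S hS c y]
  have : 0 ≤ (S.card : ℝ) * ‖y - (S.card : ℝ)⁻¹ • ∑ j ∈ S, c j‖ ^ 2 := by positivity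
  linarith

theorem dist_le_spread {ι E : Type*} [NormedAddCommGroup E] [InnerProductSpace ℝ E]
    (S : Finset ι) (c : ι → E) {i j : ι} (hi : i ∈ S) (hj : j ∈ S) :
    ‖c i - c j‖ ^ 2 ≤ 2 * spread S c := by
  classical
  by_cases hij : i = j
  · subst hij
    have : 0 ≤ spread S c := Finset.sum_nonneg fun _ _ => by positivity
    simpa using this
  set m := (S.card : ℝ)⁻¹ • ∑ j ∈ S, c j with hm
  have h1 : ‖c i - m‖ ^ 2 + ‖c j - m‖ ^ 2 ≤ spread S c := by
    rw [← Finset.sum_pair (f := fun i => ‖c i - m‖ ^ 2) hij]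
    apply Finset.sum_le_sum_of_subset_of_nonneg
    · intro k hk
      simp only [Finset.mem_insert, Finset.mem_singleton] at hk
      rcases hk with rfl | rfl <;> assumption
    · intros; positivity
  have h2 : ‖c i - c j‖ ≤ ‖c i - m‖ + ‖c j - m‖ := by
    rw [show c i - c j = (c i - m) - (c j - m) by abel]
    exact norm_sub_le _ _
  nlinarith [sq_nonneg (‖c i - m‖ - ‖c j - m‖), norm_nonneg (c i - c j)]

theorem measurable_prod_aux {ι E : Type*} [MeasurableSpace E] {e : E → E → ℝ≥0∞}
    (hem : Measurable (Function.uncurry e)) (S : Finset ι) :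
    Measurable (fun p : (ι → E) × E => ∏ i ∈ S, e (p.1 i) p.2) := by
  have hi : ∀ i, Measurable (fun p : (ι → E) × E => e (p.1 i) p.2) := by
    intro i
    have hf : Measurable fun p : (ι → E) × E => (p.1 i, p.2) :=
      ((measurable_pi_apply i).comp measurable_fst).prodMk measurable_snd
    exact hem.comp hf
  exact Finset.measurable_fun_prod S fun i _ => hi i

section GaussianBound
variable {E : Type*} [NormedAddCommGroup E] [InnerProductSpace ℝ E] [FiniteDimensional ℝ E]
  [MeasurableSpace E] [BorelSpace E]

theorem lintegral_gauss {b : ℝ} (hb : 0 < b) (a : E) :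
    ∫⁻ y : E, ENNReal.ofReal (Real.exp (-b * ‖y - a‖ ^ 2))
      = ENNReal.ofReal ((Real.pi / b) ^ (Module.finrank ℝ E / 2 : ℝ)) := by
  rw [lintegral_sub_right_eq_self (fun y : E => ENNReal.ofReal (Real.exp (-b * ‖y‖ ^ 2))) a]
  have h := GaussianFourier.integral_rexp_neg_mul_sq_norm (V := E) hb
  have hpos : 0 < (Real.pi / b) ^ (Module.finrank ℝ E / 2 : ℝ) := by positivity
  rw [← h, ofReal_integral_eq_lintegral_ofReal]
  · by_contra hn
    rw [integral_undef hn] at h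
    linarith
  · exact Filter.Eventually.of_forall fun _ => (Real.exp_pos _).le

theorem lintegral_spread {ι : Type*} [Fintype ι] (μ : Measure E) [IsProbabilityMeasure μ]
    (κ : ℝ≥0∞) (hκ : μ ≤ κ • volume) (S : Finset ι) (hS : S.Nonempty) {s : ℝ} (hs : 0 < s) :
    ∫⁻ c : ι → E, ENNReal.ofReal (Real.exp (-s * spread S c)) ∂(Measure.pi fun _ => μ)
      ≤ (κ * ENNReal.ofReal ((Real.pi / s) ^ (Module.finrank ℝ E / 2 : ℝ))) ^ (S.card - 1)
        * ENNReal.ofReal ((S.card : ℝ) ^ (Module.finrank ℝ E / 2 : ℝ)) := by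
  set d : ℝ := (Module.finrank ℝ E / 2 : ℝ)
  have hc : (0 : ℝ) < S.card := by exact_mod_cast hS.card_pos
  set G := ENNReal.ofReal ((Real.pi / s) ^ d) with hG
  set W := ENNReal.ofReal ((Real.pi / (s * S.card)) ^ d) with hW
  have hW0 : W ≠ 0 := by
    rw [hW, ne_eq, ENNReal.ofReal_eq_zero, not_le]
    positivity
  have hWt : W ≠ ∞ := ENNReal.ofReal_ne_top
  have hGW : G = W * ENNReal.ofReal ((S.card : ℝ) ^ d) := by
    rw [hG, hW, ← ENNReal.ofReal_mul (by positivity),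
      ← Real.mul_rpow (by positivity) (by positivity)]
    congr 2
    field_simp
  let e : E → E → ℝ≥0∞ := fun x y => ENNReal.ofReal (Real.exp (-s * ‖x - y‖ ^ 2))
  have hem : Measurable (Function.uncurry e) := by
    have : Continuous fun p : E × E => Real.exp (-s * ‖p.1 - p.2‖ ^ 2) := by fun_prop
    exact this.measurable.ennreal_ofReal
  have hmeas : Measurable (fun p : (ι → E) × E => ∏ i ∈ S, e (p.1 i) p.2) := by
    exact measurable_prod_aux hem S
  have key : ∀ c : ι → E, W * ENNReal.ofReal (Real.exp (-s * spread S c))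
      = ∫⁻ y, ∏ i ∈ S, e (c i) y := by
    intro c
    have h1 : ∀ y, ∏ i ∈ S, e (c i) y = ENNReal.ofReal (Real.exp (-s * spread S c)) *
       ENNReal.ofReal (Real.exp (-(s * S.card) * ‖y - (S.card : ℝ)⁻¹ • ∑ j ∈ S, c j‖ ^ 2)) := by
      intro y
      simp only [e]
      rw [← ENNReal.ofReal_prod_of_nonneg (fun _ _ => (Real.exp_pos _).le), ← Real.exp_sum,
        ← Finset.mul_sum, sum_sq_eq_spread S hS, ← ENNReal.ofReal_mul (Real.exp_pos _).le,
        ← Real.exp_add]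
      congr 2
      ring
    simp only [h1]
    rw [lintegral_const_mul' _ _ ENNReal.ofReal_ne_top, lintegral_gauss (by positivity), mul_comm]
  have gle : ∀ y, ∫⁻ x, e x y ∂μ ≤ κ * G := by
    intro y
    calc ∫⁻ x, e x y ∂μ ≤ ∫⁻ x, e x y ∂(κ • volume) := lintegral_mono' hκ le_rfl
      _ = κ * G := by rw [lintegral_smul_measure, lintegral_gauss hs, smul_eq_mul]
  have gint : ∫⁻ y, ∫⁻ x, e x y ∂μ = G := by
    rw [lintegral_lintegral_swap (μ := volume) (ν := μ) (f := fun y x => e x y)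
      (hem.comp measurable_swap).aemeasurable]
    have : ∀ x : E, ∫⁻ y, e x y = G := by
      intro x
      simp only [e, norm_sub_rev x]
      exact lintegral_gauss hs x
    simp [this]
  have main : W * ∫⁻ c : ι → E, ENNReal.ofReal (Real.exp (-s * spread S c))
      ∂(Measure.pi fun _ => μ) ≤ (κ * G) ^ (S.card - 1) * G := by
    rw [← lintegral_const_mul' _ _ hWt]
    simp only [key]
    rw [lintegral_lintegral_swap]
    · have h2 : ∀ y, ∫⁻ c : ι → E, ∏ i ∈ S, e (c i) y ∂(Measure.pi fun _ => μ)
          = (∫⁻ x, e x y ∂μ) ^ S.card := by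
        intro y
        have hm : Measurable fun x => e x y := hem.of_uncurry_right
        rw [lintegral_prod_eq_prod_lintegral_of_indepFun S (fun i (c : ι → E) => e (c i) y)
          (iIndepFun_pi (X := fun _ x => e x y) fun _ => hm.aemeasurable)
          (fun i => hm.comp (measurable_pi_apply i))]
        rw [← Finset.prod_const]
        refine Finset.prod_congr rfl fun i _ => ?_
        exact (measurePreserving_eval (fun _ : ι => μ) i).lintegral_comp hm
      simp only [h2]
      calc ∫⁻ y, (∫⁻ x, e x y ∂μ) ^ S.card
          ≤ ∫⁻ y, (κ * G) ^ (S.card - 1) * ∫⁻ x, e x y ∂μ := by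
            refine lintegral_mono fun y => ?_
            conv_lhs => rw [← Nat.sub_add_cancel hS.card_pos, pow_succ]
            gcongr
            exact gle y
        _ = (κ * G) ^ (S.card - 1) * G := by
            rw [lintegral_const_mul, gint]
            exact Measurable.lintegral_prod_left' hem
    · exact hmeas.aemeasurable
  have h3 : (κ * G) ^ (S.card - 1) * G
      = W * ((κ * G) ^ (S.card - 1) * ENNReal.ofReal ((S.card : ℝ) ^ d)) := by
    have h4 : ∀ X : ℝ≥0∞, X * G = W * (X * ENNReal.ofReal ((S.card : ℝ) ^ d)) := by
      intro X
      rw [hGW]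
      ring
    exact h4 _
  rw [h3] at main
  exact (ENNReal.mul_le_mul_iff_right hW0 hWt).1 main

theorem pi_ae_injective {ι : Type*} [Fintype ι] (μ : Measure E) [IsProbabilityMeasure μ]
    [NullSingletonClass μ] : ∀ᵐ c ∂(Measure.pi fun _ : ι => μ), Function.Injective c := by
  have : ∀ i j : ι, i ≠ j → ∀ᵐ c ∂(Measure.pi fun _ : ι => μ), c i ≠ c j := by
    intro i j hij
    have hind := (iIndepFun_pi (μ := fun _ : ι => μ) (X := fun _ x => x)
      fun _ => aemeasurable_id).indepFun hij
    rw [indepFun_iff_map_prod_eq_prod_map_map (measurable_pi_apply i).aemeasurable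
      (measurable_pi_apply j).aemeasurable] at hind
    rw [(measurePreserving_eval (fun _ : ι => μ) i).map_eq,
      (measurePreserving_eval (fun _ : ι => μ) j).map_eq] at hind
    have hd : (μ.prod μ) {p : E × E | p.1 = p.2} = 0 := by
      have hms : MeasurableSet {p : E × E | p.1 = p.2} :=
        (isClosed_eq continuous_fst continuous_snd).measurableSet
      rw [Measure.measure_prod_null hms]
      refine Filter.Eventually.of_forall fun x => ?_
      have : Prod.mk x ⁻¹' {p : E × E | p.1 = p.2} = {x} := by
        ext y; simp [eq_comm]
      show μ (Prod.mk x ⁻¹' {p : E × E | p.1 = p.2}) = 0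
      rw [this]; simp
    rw [← hind, Measure.map_apply (by fun_prop)
      (isClosed_eq continuous_fst continuous_snd).measurableSet] at hd
    rw [ae_iff]
    simpa using hd
  have h2 : ∀ᵐ c ∂(Measure.pi fun _ : ι => μ), ∀ i j : ι, i ≠ j → c i ≠ c j := by
    rw [ae_all_iff]; intro i
    rw [ae_all_iff]; intro j
    by_cases h : i = j
    · simp [h]
    · simpa [h] using this i j h
  filter_upwards [h2] with c hc i j hij
  by_contra hne
  exact hc i j hne hij
end GaussianBound

theorem exists_good (n L M : ℕ) (hn : 0 < n) (hL : 0 < L) (a R s : ℝ) (ha : 0 < a) (hs : 0 < s) :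
    ∃ c : Fin M → EuclideanSpace ℝ (Fin n), Function.Injective c ∧
      (∀ i j, c i j ∈ Set.Ico (0 : ℝ) a) ∧
      ((({S ∈ Finset.powersetCard L (Finset.univ : Finset (Fin M)) | spread S c ≤ R}).card : ℕ) : ℝ)
        ≤ (M : ℝ) ^ L * (Real.exp (s * R) *
          (((a ^ n)⁻¹ * (Real.pi / s) ^ (n / 2 : ℝ)) ^ (L - 1) * (L : ℝ) ^ (n / 2 : ℝ))) := by
  have : NeZero n := ⟨hn.ne'⟩
  let E := EuclideanSpace ℝ (Fin n)
  let B : Set E := (fun x : E => WithLp.ofLp x) ⁻¹' (Set.univ.pi fun _ : Fin n => Set.Ico (0 : ℝ) a)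
  have hBm0 : MeasurableSet (Set.univ.pi fun _ : Fin n => Set.Ico (0 : ℝ) a) :=
    MeasurableSet.univ_pi fun _ => measurableSet_Ico
  have hBm : MeasurableSet B := (PiLp.volume_preserving_ofLp (Fin n)).measurable hBm0
  have hBv : (volume : Measure E) B = ENNReal.ofReal (a ^ n) := by
    have := (PiLp.volume_preserving_ofLp (Fin n)).measure_preimage hBm0.nullMeasurableSet
    refine this.trans ?_
    rw [volume_pi_pi]
    simp [Real.volume_Ico, ENNReal.ofReal_pow ha.le]
  have hB0 : (volume : Measure E) B ≠ 0 := by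
    rw [hBv, ne_eq, ENNReal.ofReal_eq_zero, not_le]; positivity
  have hBt : (volume : Measure E) B ≠ ∞ := by rw [hBv]; exact ENNReal.ofReal_ne_top
  let μ : Measure E := (volume : Measure E)[|B]
  have : IsProbabilityMeasure μ := cond_isProbabilityMeasure_of_finite hB0 hBt
  have hac : μ ≪ volume := cond_absolutelyContinuous
  have : NullSingletonClass μ := ⟨fun x => hac (measure_singleton x)⟩
  have hκ : μ ≤ ENNReal.ofReal ((a ^ n)⁻¹) • volume := by
    have : ENNReal.ofReal ((a ^ n)⁻¹) = ((volume : Measure E) B)⁻¹ := by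
      rw [hBv, ENNReal.ofReal_inv_of_pos (by positivity)]
    rw [this]
    refine Measure.le_iff.2 fun t ht => ?_
    simp only [μ, ProbabilityTheory.cond, Measure.smul_apply, smul_eq_mul]
    gcongr
    exact Measure.restrict_le_self
  have hmem : ∀ᵐ c ∂(Measure.pi fun _ : Fin M => μ), ∀ i, c i ∈ B := by
    rw [ae_all_iff]
    intro i
    have h1 : ∀ᵐ x ∂μ, x ∈ B := ae_cond_mem hBm
    exact (measurePreserving_eval (fun _ : Fin M => μ) i).quasiMeasurePreserving.ae h1
  have hinj := pi_ae_injective (ι := Fin M) μ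
  set P := Finset.powersetCard L (Finset.univ : Finset (Fin M)) with hP
  let Φ : (Fin M → E) → ℝ≥0∞ := fun c => ∑ S ∈ P, ENNReal.ofReal (Real.exp (-s * spread S c))
  have hsm : ∀ S : Finset (Fin M), Measurable fun c : Fin M → E =>
      ENNReal.ofReal (Real.exp (-s * spread S c)) := by
    intro S
    have : Continuous fun c : Fin M → E => Real.exp (-s * spread S c) := by
      unfold spread; fun_prop
    exact this.measurable.ennreal_ofReal
  set A : ℝ := ((a ^ n)⁻¹ * (Real.pi / s) ^ (n / 2 : ℝ)) ^ (L - 1) * (L : ℝ) ^ (n / 2 : ℝ) with hA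
  have hΦm : Measurable Φ := Finset.measurable_fun_sum _ fun S _ => hsm S
  have hA0 : 0 ≤ A := by positivity
  have hΦ : ∫⁻ c, Φ c ∂(Measure.pi fun _ : Fin M => μ) ≤ ENNReal.ofReal (P.card * A) := by
    simp only [Φ]
    rw [lintegral_finsetSum _ fun S _ => hsm S]
    calc _ ≤ ∑ S ∈ P, ENNReal.ofReal A := by
          refine Finset.sum_le_sum fun S hS => ?_
          have hcard : S.card = L := (Finset.mem_powersetCard.1 hS).2
          have h := lintegral_spread μ _ hκ S (Finset.card_pos.1 (hcard ▸ hL)) hs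
          rw [hcard, finrank_euclideanSpace_fin, ← ENNReal.ofReal_mul (by positivity),
            ← ENNReal.ofReal_pow (by positivity), ← ENNReal.ofReal_mul (by positivity)] at h
          exact h
      _ = ENNReal.ofReal (P.card * A) := by
          rw [Finset.sum_const, nsmul_eq_mul, ENNReal.ofReal_mul (p := (P.card : ℝ)) (by positivity),
            ENNReal.ofReal_natCast]
  have hnull : (Measure.pi fun _ : Fin M => μ)
      {c | ¬ (Function.Injective c ∧ ∀ i, c i ∈ B)} = 0 := by
    rw [← ae_iff]
    filter_upwards [hinj, hmem] with c h1 h2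
    exact ⟨h1, h2⟩
  obtain ⟨c, hc, hcΦ⟩ := exists_notMem_null_le_lintegral hΦm.aemeasurable hnull
  simp only [Set.mem_ofPred_eq, not_not] at hc
  refine ⟨c, hc.1, fun i j => hc.2 i j (Set.mem_univ j), ?_⟩
  have h1 : ∑ S ∈ P, Real.exp (-s * spread S c) ≤ P.card * A := by
    have := hcΦ.trans hΦ
    simp only [Φ] at this
    rw [← ENNReal.ofReal_sum_of_nonneg (fun _ _ => (Real.exp_pos _).le)] at this
    exact (ENNReal.ofReal_le_ofReal_iff (by positivity)).1 this
  have h2 : ((P.filter fun S => spread S c ≤ R).card : ℝ) * Real.exp (-s * R)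
      ≤ ∑ S ∈ P, Real.exp (-s * spread S c) := by
    rw [← nsmul_eq_mul, ← Finset.sum_const]
    calc _ ≤ ∑ S ∈ P.filter fun S => spread S c ≤ R, Real.exp (-s * spread S c) := by
          refine Finset.sum_le_sum fun S hS => ?_
          have := (Finset.mem_filter.1 hS).2
          refine Real.exp_le_exp.2 ?_
          nlinarith
      _ ≤ _ := Finset.sum_le_sum_of_subset_of_nonneg (Finset.filter_subset _ _)
          fun _ _ _ => (Real.exp_pos _).le
  have h3 : (P.card : ℝ) ≤ (M : ℝ) ^ L := by
    rw [hP, Finset.card_powersetCard, Finset.card_univ, Fintype.card_fin]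
    exact_mod_cast Nat.choose_le_pow M L
  have h4 : ((P.filter fun S => spread S c ≤ R).card : ℝ) * Real.exp (-s * R) ≤ M ^ L * A :=
    h2.trans (h1.trans (by gcongr))
  have h5 : Real.exp (-s * R) * Real.exp (s * R) = 1 := by
    rw [← Real.exp_add]; simp
  calc ((P.filter fun S => spread S c ≤ R).card : ℝ)
      = ((P.filter fun S => spread S c ≤ R).card : ℝ) * Real.exp (-s * R) * Real.exp (s * R) := by
        rw [mul_assoc, h5, mul_one]
    _ ≤ M ^ L * A * Real.exp (s * R) := by gcongr
    _ = _ := by ring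

theorem spread_univ_eq {L : ℕ} {E : Type*} [NormedAddCommGroup E] [InnerProductSpace ℝ E]
    (x : Fin L → E) :
    spread Finset.univ x = ∑ i, ‖x i - (L : ℝ)⁻¹ • ∑ i, x i‖ ^ 2 := by
  simp [spread]

theorem exists_finset (n L M : ℕ) (hn : 0 < n) (hL : 0 < L) (a R s : ℝ) (ha : 0 < a) (hs : 0 < s) :
    ∃ C₀ : Finset (EuclideanSpace ℝ (Fin n)),
      (∀ c ∈ C₀, ∀ j, c j ∈ Set.Ico (0 : ℝ) a) ∧
      (∀ x : Fin L → EuclideanSpace ℝ (Fin n), Function.Injective x → (∀ i, x i ∈ C₀) →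
        R < spread Finset.univ x) ∧
      (M : ℝ) - (M : ℝ) ^ L * (Real.exp (s * R) *
          (((a ^ n)⁻¹ * (Real.pi / s) ^ (n / 2 : ℝ)) ^ (L - 1) * (L : ℝ) ^ (n / 2 : ℝ)))
        ≤ C₀.card := by
  classical
  obtain ⟨c, hinj, hbox, hbad⟩ := exists_good n L M hn hL a R s ha hs
  set bad := {S ∈ Finset.powersetCard L (Finset.univ : Finset (Fin M)) | spread S c ≤ R}
    with hbaddef
  have hpick : ∀ S : Finset (Fin M), ∃ i : Option (Fin M), S ∈ bad → ∃ k ∈ S, i = some k := by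
    intro S
    by_cases hS : S ∈ bad
    · have h1 := (Finset.mem_powersetCard.1 (Finset.mem_filter.1 hS).1).2
      obtain ⟨k, hk⟩ := Finset.card_pos.1 (h1 ▸ hL)
      exact ⟨some k, fun _ => ⟨k, hk, rfl⟩⟩
    · exact ⟨none, fun h => absurd h hS⟩
  choose p hp using hpick
  let D : Finset (Fin M) := Finset.univ.filter fun k => some k ∈ bad.image p
  have hD : D.card ≤ bad.card := by
    refine le_trans ?_ (Finset.card_image_le (s := bad) (f := p))
    refine Finset.card_le_card_of_injOn some (fun k hk => ?_) (Option.some_injective _).injOn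
    exact (Finset.mem_filter.1 hk).2
  refine ⟨(Dᶜ).image c, ?_, ?_, ?_⟩
  · intro y hy j
    obtain ⟨i, -, rfl⟩ := Finset.mem_image.1 hy
    exact hbox i j
  · intro x hx hmem
    by_contra hcon
    have h1 : ∀ i, ∃ k, k ∈ Dᶜ ∧ c k = x i := fun i => by
      obtain ⟨k, hk, h⟩ := Finset.mem_image.1 (hmem i)
      exact ⟨k, hk, h⟩
    choose σ hσ hσx using h1
    have hσi : Function.Injective σ := by
      intro i j hij
      apply hx
      rw [← hσx, ← hσx, hij]
    have hcard : (Finset.univ.image σ).card = L := by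
      rw [Finset.card_image_of_injective _ hσi]; simp
    have hspread : spread (Finset.univ.image σ) c = spread Finset.univ x := by
      unfold spread
      rw [Finset.sum_image hσi.injOn, Finset.sum_image hσi.injOn, hcard]
      simp [hσx]
    have hb : Finset.univ.image σ ∈ bad := by
      rw [hbaddef, Finset.mem_filter, Finset.mem_powersetCard]
      exact ⟨⟨Finset.subset_univ _, hcard⟩, hspread ▸ not_lt.1 hcon⟩
    obtain ⟨k, hk, hpk⟩ := hp _ hb
    obtain ⟨i, -, rfl⟩ := Finset.mem_image.1 hk
    have hD2 : σ i ∈ D := by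
      refine Finset.mem_filter.2 ⟨Finset.mem_univ _, ?_⟩
      rw [← hpk]
      exact Finset.mem_image_of_mem _ hb
    exact Finset.mem_compl.1 (hσ i) hD2
  · rw [Finset.card_image_of_injective _ hinj, Finset.card_compl, Fintype.card_fin,
      Nat.cast_sub (by simpa using Finset.card_le_univ D)]
    have : (D.card : ℝ) ≤ bad.card := by exact_mod_cast hD
    linarith

theorem periodic_spread {n L : ℕ} (hL : 0 < L) {a r R : ℝ} (hr : 0 ≤ r) (ha : 0 < a)
    (hrR : 2 * R ≤ r ^ 2)
    (C₀ : Finset (EuclideanSpace ℝ (Fin n)))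
    (hbox : ∀ c ∈ C₀, ∀ j, c j ∈ Set.Ico (0 : ℝ) a)
    (hgood : ∀ x : Fin L → EuclideanSpace ℝ (Fin n), Function.Injective x → (∀ i, x i ∈ C₀) →
        R < spread Finset.univ x)
    (x : Fin L → EuclideanSpace ℝ (Fin n)) (hx : Function.Injective x)
    (hper : ∀ i, ∃ c ∈ C₀, ∃ v : Fin n → ℤ, ∀ j, x i j = c j + (a + r) * (v j : ℝ)) :
    R < spread Finset.univ x := by
  by_contra hcon
  rw [not_lt] at hcon
  choose c hc v hv using hper
  have hdist : ∀ i k j, |x i j - x k j| ≤ r := by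
    intro i k j
    have h1 := dist_le_spread Finset.univ x (Finset.mem_univ i) (Finset.mem_univ k)
    have h2 : ‖x i - x k‖ ≤ r := by
      apply le_of_sq_le_sq _ hr
      linarith
    refine le_trans ?_ h2
    simpa using PiLp.norm_apply_le (x i - x k) j
  have hlt : ∀ i k j, v i j ≤ v k j := by
    intro i k j
    by_contra hlt
    rw [not_le] at hlt
    have h1 : (v k j : ℝ) + 1 ≤ v i j := by exact_mod_cast hlt
    have h2 := (abs_le.1 (hdist i k j)).2
    rw [hv, hv] at h2
    have h3 := (hbox _ (hc i) j).1
    have h4 := (hbox _ (hc k) j).2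
    nlinarith
  let i₀ : Fin L := ⟨0, hL⟩
  let w : EuclideanSpace ℝ (Fin n) := WithLp.toLp 2 fun j => (a + r) * (v i₀ j : ℝ)
  have hxc : ∀ i, x i = c i + w := by
    intro i
    ext j
    have : v i j = v i₀ j := le_antisymm (hlt _ _ _) (hlt _ _ _)
    simp [w, hv, this]
  have hsp : spread Finset.univ x = spread Finset.univ c := by
    unfold spread
    have hL' : (L : ℝ) ≠ 0 := by positivity
    refine Finset.sum_congr rfl fun i _ => ?_
    congr 2
    simp only [hxc, Finset.sum_add_distrib, Finset.sum_const, smul_add, Finset.card_univ,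
      Fintype.card_fin]
    rw [← Nat.cast_smul_eq_nsmul ℝ, smul_smul, inv_mul_cancel₀ hL', one_smul]
    abel
  have hci : Function.Injective c := by
    intro i k hik
    apply hx
    rw [hxc, hxc, hik]
  have := hgood c hci hc
  linarith

theorem key_const (L n : ℕ) (hL : 2 ≤ L) (N s : ℝ) (hN : 0 < N)
    (hsdef : s = ((L : ℝ) - 1) / (2 * N * L)) (q A : ℝ)
    (hq : q = (1 / 2 : ℝ) * Real.log (((L : ℝ) - 1) / (2 * Real.pi * Real.exp 1 * N * L))
              - Real.log L / (2 * ((L : ℝ) - 1))) :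
    Real.exp (s * (n * N * L)) *
      ((A⁻¹ * (Real.pi / s) ^ (n / 2 : ℝ)) ^ (L - 1) * (L : ℝ) ^ (n / 2 : ℝ))
      = (A⁻¹ * Real.exp (-q) ^ n) ^ (L - 1) := by
  have hL1 : (0 : ℝ) < (L : ℝ) - 1 := by
    have : (2 : ℝ) ≤ L := by exact_mod_cast hL
    linarith
  have hL0 : (0 : ℝ) < L := by linarith
  have hs : 0 < s := by rw [hsdef]; positivity
  have hcast : ((L - 1 : ℕ) : ℝ) = (L : ℝ) - 1 := by
    rw [Nat.cast_sub (by omega)]; simp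
  have hlog : Real.log (((L : ℝ) - 1) / (2 * Real.pi * Real.exp 1 * N * L))
      = - (1 + Real.log (Real.pi / s)) := by
    have : ((L : ℝ) - 1) / (2 * Real.pi * Real.exp 1 * N * L) = (Real.exp 1 * (Real.pi / s))⁻¹ := by
      rw [hsdef]; field_simp
    rw [this, Real.log_inv, Real.log_mul (Real.exp_pos 1).ne' (by positivity), Real.log_exp]
  rw [hlog] at hq
  rw [mul_pow, mul_pow, Real.rpow_def_of_pos (by positivity : 0 < Real.pi / s),
    Real.rpow_def_of_pos hL0, ← Real.exp_nat_mul, ← Real.exp_nat_mul, ← Real.exp_nat_mul, hcast]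
  have h1 : s * (n * N * L) = n * ((L : ℝ) - 1) / 2 := by
    rw [hsdef]; field_simp
  rw [h1]
  have h2 : ((L : ℝ) - 1) * (n * -q) = n * ((L : ℝ) - 1) / 2
      + ((L : ℝ) - 1) * (Real.log (Real.pi / s) * (n / 2)) + Real.log L * (n / 2) := by
    rw [hq]; field_simp; ring
  rw [h2, Real.exp_add, Real.exp_add]
  ring

end Helpers

/-- For `N > 0`, `L ≥ 2` and `ε > 0`, for all sufficiently large `n` there
exist `T > 0` and a finite `C₀ ⊆ [0, T)^n` such that the periodic set
`C = C₀ + T·ℤⁿ` satisfies: (i) every `L` pairwise distinct points of `C` have average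
squared radius greater than `nN` (in particular, `C` is an `(N, L-1)`-multiple packing);
and (ii) `(1/n) ln(|C₀| / Tⁿ) ≥ (1/2) ln((L-1)/(2πeNL)) - (ln L)/(2(L-1)) - ε`. -/
theorem infinite_constellation_good_density (L : ℕ) (hL : 2 ≤ L) (N ε : ℝ)
    (hN : 0 < N) (hε : 0 < ε) :
    ∃ n₀ : ℕ, ∀ n : ℕ, n₀ ≤ n →
      ∃ T : ℝ, 0 < T ∧
        ∃ C₀ : Finset (EuclideanSpace ℝ (Fin n)),
          (∀ c ∈ C₀, ∀ j, c j ∈ Set.Ico (0 : ℝ) T) ∧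
          (∀ x : Fin L → EuclideanSpace ℝ (Fin n), Function.Injective x →
            (∀ i, ∃ c ∈ C₀, ∃ v : Fin n → ℤ, ∀ j, x i j = c j + T * (v j : ℝ)) →
            (n : ℝ) * N < (L : ℝ)⁻¹ * ∑ i, ‖x i - (L : ℝ)⁻¹ • ∑ i, x i‖ ^ 2) ∧
          (∀ y : EuclideanSpace ℝ (Fin n),
            {p : EuclideanSpace ℝ (Fin n) |
                (∃ c ∈ C₀, ∃ v : Fin n → ℤ, ∀ j, p j = c j + T * (v j : ℝ)) ∧
                y ∈ Metric.closedBall p (Real.sqrt (n * N))}.encard ≤ (L : ℕ∞) - 1) ∧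
          (1 / 2 : ℝ) * Real.log (((L : ℝ) - 1) / (2 * Real.pi * Real.exp 1 * N * L))
              - Real.log L / (2 * ((L : ℝ) - 1)) - ε
            ≤ (n : ℝ)⁻¹ * Real.log ((C₀.card : ℝ) / T ^ n) := by
  obtain ⟨n₀, hn₀⟩ := exists_nat_ge (2 * Real.log 8 / ε)
  refine ⟨n₀ + 1, fun n hn => ?_⟩
  have hn1 : 0 < n := by omega
  have hnR : (0 : ℝ) < n := by exact_mod_cast hn1
  have hn8 : Real.log 8 ≤ n * (ε / 2) := by
    have h1 : (n₀ : ℝ) ≤ n := by exact_mod_cast (by omega : n₀ ≤ n)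
    have h2 := hn₀.trans h1
    rw [div_le_iff₀ hε] at h2
    linarith
  have hL2 : (2 : ℝ) ≤ L := by exact_mod_cast hL
  have hL1 : (0 : ℝ) < (L : ℝ) - 1 := by linarith
  have hL0 : (0 : ℝ) < L := by linarith
  set q : ℝ := (1 / 2 : ℝ) * Real.log (((L : ℝ) - 1) / (2 * Real.pi * Real.exp 1 * N * L))
              - Real.log L / (2 * ((L : ℝ) - 1)) with hq
  set s : ℝ := ((L : ℝ) - 1) / (2 * N * L) with hsdef
  have hs : 0 < s := by positivity
  set R : ℝ := n * N * L with hR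
  have hR0 : 0 < R := by positivity
  set r : ℝ := Real.sqrt (2 * R) with hr
  have hr0 : 0 < r := Real.sqrt_pos.2 (by positivity)
  have hr2 : 2 * R ≤ r ^ 2 := (Real.sq_sqrt (by positivity)).ge
  set k : ℝ := Real.exp (-q) with hk
  have hk0 : 0 < k := Real.exp_pos _
  set a : ℝ := 2 * k + 2 * r / ε with hadef
  have ha0 : 0 < a := by positivity
  have hak : 2 * k ≤ a := by
    have : 0 < 2 * r / ε := by positivity
    linarith
  have har : r / a ≤ ε / 2 := by
    rw [div_le_iff₀ ha0, hadef]
    have : ε / 2 * (2 * k + 2 * r / ε) = ε * k + r := by field_simp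
    rw [this]
    have : 0 < ε * k := by positivity
    linarith
  set z : ℝ := (a / k) ^ n / 2 with hz
  have hz1 : 1 ≤ z := by
    have h1 : (2 : ℝ) ≤ a / k := by rw [le_div_iff₀ hk0]; exact hak
    have h2 : a / k ≤ (a / k) ^ n := le_self_pow₀ (by linarith) hn1.ne'
    rw [hz]; linarith
  obtain ⟨M, hM⟩ : ∃ M : ℕ, M = ⌊z⌋₊ := ⟨_, rfl⟩
  have hMz : (M : ℝ) ≤ z := by rw [hM]; exact Nat.floor_le (by linarith)
  have hMz2 : z / 2 ≤ M := by
    have h1 : z < M + 1 := by rw [hM]; exact Nat.lt_floor_add_one z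
    have h2 : (1 : ℝ) ≤ M := by
      have : 1 ≤ M := by rw [hM]; exact Nat.le_floor (by simpa using hz1)
      exact_mod_cast this
    linarith
  obtain ⟨C₀, hbox, hgood, hcard⟩ := exists_finset n L M hn1 (by omega) a R s ha0 hs
  rw [key_const L n hL N s hN hsdef q (a ^ n) hq] at hcard
  have hbound : (M : ℝ) ^ L * ((a ^ n)⁻¹ * k ^ n) ^ (L - 1) ≤ M / 2 := by
    have h1 : (M : ℝ) * ((a ^ n)⁻¹ * k ^ n) ≤ 1 / 2 := by
      calc (M : ℝ) * ((a ^ n)⁻¹ * k ^ n) ≤ z * ((a ^ n)⁻¹ * k ^ n) := by gcongr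
        _ = 1 / 2 := by rw [hz, div_pow]; field_simp
    have h0 : 0 ≤ (M : ℝ) * ((a ^ n)⁻¹ * k ^ n) := by positivity
    have h2 : ((M : ℝ) * ((a ^ n)⁻¹ * k ^ n)) ^ (L - 1) ≤ 1 / 2 :=
      (pow_le_of_le_one h0 (by linarith) (by omega)).trans h1
    calc (M : ℝ) ^ L * ((a ^ n)⁻¹ * k ^ n) ^ (L - 1)
        = M * ((M : ℝ) * ((a ^ n)⁻¹ * k ^ n)) ^ (L - 1) := by
          conv_lhs => rw [← Nat.sub_add_cancel (by omega : 1 ≤ L), pow_succ]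
          simp only [Nat.add_sub_cancel]
          rw [mul_pow]; ring
      _ ≤ M * (1 / 2) := by gcongr
      _ = M / 2 := by ring
  have hcard2 : z / 4 ≤ C₀.card := by linarith
  have hi : ∀ x : Fin L → EuclideanSpace ℝ (Fin n), Function.Injective x →
      (∀ i, ∃ c ∈ C₀, ∃ v : Fin n → ℤ, ∀ j, x i j = c j + (a + r) * (v j : ℝ)) →
      R < spread Finset.univ x :=
    fun x hx hper => periodic_spread (by omega) hr0.le ha0 hr2 C₀ hbox hgood x hx hper
  refine ⟨a + r, by positivity, C₀, ?_, ?_, ?_, ?_⟩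
  · intro c hc j
    have := hbox c hc j
    exact ⟨this.1, by linarith [this.2]⟩
  · intro x hx hper
    have h := hi x hx hper
    rw [spread_univ_eq] at h
    rw [lt_inv_mul_iff₀ hL0]
    rw [hR] at h
    linarith
  · intro y
    by_contra hcon
    rw [not_le] at hcon
    have hle : (L : ℕ∞) ≤ Set.encard {p : EuclideanSpace ℝ (Fin n) |
                (∃ c ∈ C₀, ∃ v : Fin n → ℤ, ∀ j, p j = c j + (a + r) * (v j : ℝ)) ∧
                y ∈ Metric.closedBall p (Real.sqrt (n * N))} := by
      have h1 := Order.add_one_le_of_lt hcon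
      refine le_trans ?_ h1
      exact le_tsub_add
    obtain ⟨t, hts, htc⟩ := Set.exists_subset_encard_eq hle
    have htf : t.Finite := Set.finite_of_encard_eq_coe htc
    have hcardt : htf.toFinset.card = L := by
      have := htf.encard_eq_coe_toFinset_card
      rw [htc] at this
      exact_mod_cast this.symm
    let e := htf.toFinset.equivFinOfCardEq hcardt
    let x : Fin L → EuclideanSpace ℝ (Fin n) := fun i => (e.symm i : EuclideanSpace ℝ (Fin n))
    have hx : Function.Injective x := Subtype.val_injective.comp e.symm.injective
    have hxt : ∀ i, x i ∈ t := fun i => htf.mem_toFinset.1 (e.symm i).2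
    have h := hi x hx fun i => (hts (hxt i)).1
    have hne : (Finset.univ : Finset (Fin L)).Nonempty := ⟨⟨0, by omega⟩, Finset.mem_univ _⟩
    have h2 := spread_le Finset.univ hne x y
    have h3 : ∑ i, ‖x i - y‖ ^ 2 ≤ ∑ _i : Fin L, (n * N : ℝ) := by
      refine Finset.sum_le_sum fun i _ => ?_
      have h4 := (hts (hxt i)).2
      rw [Metric.mem_closedBall, dist_comm, dist_eq_norm] at h4
      calc ‖x i - y‖ ^ 2 ≤ Real.sqrt (n * N) ^ 2 := by gcongr
        _ = n * N := Real.sq_sqrt (by positivity)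
    rw [Finset.sum_const, Finset.card_univ, Fintype.card_fin, nsmul_eq_mul] at h3
    rw [hR] at h
    linarith
  · have hT : 0 < a + r := by positivity
    have hlow : (a / (k * (a + r))) ^ n / 8 ≤ (C₀.card : ℝ) / (a + r) ^ n := by
      rw [le_div_iff₀ (by positivity)]
      refine le_trans (le_of_eq ?_) hcard2
      rw [hz, div_pow, div_pow, mul_pow]
      field_simp
      norm_num
    have hlog : n * (Real.log a - (Real.log k + Real.log (a + r))) - Real.log 8
        ≤ Real.log ((C₀.card : ℝ) / (a + r) ^ n) := by
      refine le_trans (le_of_eq ?_) (Real.log_le_log (by positivity) hlow)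
      rw [Real.log_div (by positivity) (by norm_num), Real.log_pow,
        Real.log_div ha0.ne' (by positivity), Real.log_mul hk0.ne' hT.ne']
    have hlogk : Real.log k = -q := Real.log_exp _
    have hlogT : Real.log (a + r) - Real.log a ≤ ε / 2 := by
      rw [← Real.log_div hT.ne' ha0.ne']
      have h1 := Real.log_le_sub_one_of_pos (show 0 < (a + r) / a by positivity)
      have h2 : (a + r) / a = 1 + r / a := by field_simp
      rw [h2] at h1 ⊢
      linarith
    rw [le_inv_mul_iff₀ hnR]
    refine le_trans ?_ hlog
    rw [hlogk]
    nlinarith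
end
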